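/- Let Λ ⊂ ℝ³ be a bounded open set of finite perimeter, 0 ≤ ρ ≤ 1, and Ω ⊂ Λ a Borel set of finite perimeter whose essential boundary intersects the essential boundary of Λ in an 𝓗²-null set. Then 𝓔_Λ[ρ, Λ∖Ω] = Per(Λ) + 𝓔_Λ[1−ρ, Ω]. -/

import Mathlib

open MeasureTheory Metric Set Filter Bornology
open scoped Topology ENNReal NNReal Pointwise

noncomputable section

/-- Three-dimensional Euclidean space. -/
abbrev E3 : Type := EuclideanSpace ℝ (Fin 3)

/-- The divergence of a vector field on `E3`, defined as the trace of its derivative. -/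
def divg (φ : E3 → E3) (x : E3) : ℝ :=
  LinearMap.trace ℝ E3 (fderiv ℝ φ x : E3 →ₗ[ℝ] E3)

/-- The candidate values `∫_Ω div φ` over `C¹` compactly supported vector fields bounded by one. -/
def perCand (Ω : Set E3) : Set ℝ :=
  {a : ℝ | ∃ φ : E3 → E3, ContDiff ℝ 1 φ ∧ HasCompactSupport φ ∧
      (∀ x, ‖φ x‖ ≤ 1) ∧ a = ∫ x in Ω, divg φ x}

/-- The perimeter of a set, in the sense of geometric measure theory. -/
def per (Ω : Set E3) : ℝ := sSup (perCand Ω)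

/-- A set has finite perimeter if the family of integrals defining the perimeter is
bounded above. -/
def HasFinPer (Ω : Set E3) : Prop := BddAbove (perCand Ω)

/-- The Lebesgue volume of a set as a real number. -/
def vol (Ω : Set E3) : ℝ := (volume Ω).toReal

/-- The liquid drop energy `𝓔_Λ[ρ,Ω]`. -/
def ldEnergy (Λ : Set E3) (ρ : ℝ) (Ω : Set E3) : ℝ :=
  per Ω + (1/2) * ∫ x, ∫ y,
    (Set.indicator Ω (fun _ => (1:ℝ)) x - ρ * Set.indicator Λ (fun _ => (1:ℝ)) x) *
      (Set.indicator Ω (fun _ => (1:ℝ)) y - ρ * Set.indicator Λ (fun _ => (1:ℝ)) y) / ‖x - y‖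

/-- The neutral ground state energy `E_Λ(ρ)`. -/
def EE (Λ : Set E3) (ρ : ℝ) : ℝ :=
  sInf {t : ℝ | ∃ Ω : Set E3, MeasurableSet Ω ∧ Ω ⊆ Λ ∧ HasFinPer Ω ∧
    vol Ω = ρ * vol Λ ∧ t = ldEnergy Λ ρ Ω}

/-- The liquid drop energy `I[Ω]` of an isolated droplet (no background). -/
def II (Ω : Set E3) : ℝ :=
  per Ω + (1/2) * ∫ x in Ω, ∫ y in Ω, 1 / ‖x - y‖

/-- `μ* = inf I[Ω]/|Ω|`. -/
def muStar : ℝ :=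
  sInf {t : ℝ | ∃ Ω : Set E3, MeasurableSet Ω ∧ HasFinPer Ω ∧
    0 < volume Ω ∧ volume Ω < ⊤ ∧ t = II Ω / vol Ω}

/-- A minimizer for the isolated liquid drop problem. -/
def IsMinimizer (Ω : Set E3) : Prop :=
  MeasurableSet Ω ∧ HasFinPer Ω ∧ 0 < volume Ω ∧ volume Ω < ⊤ ∧ II Ω = muStar * vol Ω

/-- The set of masses of minimizers. -/
def minimizerMasses : Set ℝ := {m : ℝ | ∃ Ω : Set E3, IsMinimizer Ω ∧ m = vol Ω}

/-- The largest mass of a minimizer. -/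
def mStar : ℝ := sSup minimizerMasses

/-- The smallest mass of a minimizer. -/
def mStarStar : ℝ := sInf minimizerMasses

/-- `Λ` is an `(r,L)`-Lipschitz open set: near each boundary point it is, in a suitable
orthonormal coordinate system, the epigraph of an `L`-Lipschitz function. -/
def IsLipschitzDomain (r L : ℝ) (Λ : Set E3) : Prop :=
  ∀ x ∈ frontier Λ, ∃ (g : E3 ≃ᵢ E3) (f : ℝ × ℝ → ℝ),
    LipschitzWith L.toNNReal f ∧
    Λ ∩ ball x r = {y ∈ ball x r | f (g y 0, g y 1) < g y 2}

/-- Fisher regularity of the boundary. -/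
def FisherCond (C ℓ : ℝ) (Λ : Set E3) : Prop :=
  ∀ h : ℝ, 0 < h → h ≤ ℓ → (volume (frontier Λ + ball (0:E3) h)).toReal ≤ C * ℓ^2 * h

/-- An admissible sequence of domains for the thermodynamic limit. -/
def IsAdmissibleSeq (r L C : ℝ) (Λs : ℕ → Set E3) (ℓ : ℕ → ℝ) : Prop :=
  Tendsto ℓ atTop atTop ∧
  ∀ n : ℕ, IsOpen (Λs n) ∧ IsBounded (Λs n) ∧ IsLipschitzDomain r L (Λs n) ∧
    ball 0 (ℓ n / C) ⊆ Λs n ∧ Λs n ⊆ ball 0 (ℓ n) ∧ FisherCond C (ℓ n) (Λs n)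

/-- `e` is the thermodynamic limit function of the liquid drop model. -/
def IsThermoLimit (e : ℝ → ℝ) : Prop :=
  ∀ ρ : ℝ, 0 ≤ ρ → ρ ≤ 1 →
    ∀ (r L C : ℝ) (Λs : ℕ → Set E3) (ℓ : ℕ → ℝ), 0 < r → 0 < L → 0 < C →
      IsAdmissibleSeq r L C Λs ℓ →
      Tendsto (fun n => EE (Λs n) ρ / vol (Λs n)) atTop (𝓝 (e ρ))

/-- The domain for the `N`-particle Jellium problem: `N^{1/3} Λ₁` with `Λ₁` the ball of
unit volume centered at the origin. -/
def jelDomain (N : ℕ) : Set E3 :=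
  ball (0:E3) ((N : ℝ) ^ ((1:ℝ)/3) * (3 / (4 * Real.pi)) ^ ((1:ℝ)/3))

/-- The `N`-particle Jellium ground state energy. -/
def jelN (N : ℕ) : ℝ :=
  sInf {t : ℝ | ∃ x : Fin N → E3, (∀ j, x j ∈ jelDomain N) ∧
    t = (∑ j : Fin N, ∑ k : Fin N, if j < k then 1 / ‖x j - x k‖ else 0)
      - (∑ j : Fin N, ∫ y in jelDomain N, 1 / ‖x j - y‖)
      + (1/2) * ∫ x' in jelDomain N, ∫ y in jelDomain N, 1 / ‖x' - y‖}

/-- `eJ` is the Jellium energy per particle in the thermodynamic limit. -/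
def IsJelliumLimit (eJ : ℝ) : Prop :=
  Tendsto (fun N : ℕ => jelN N / (N : ℝ)) atTop (𝓝 eJ)

/-- The grand-canonical liquid drop energy `F_Λ(ρ)`. -/
def FF (Λ : Set E3) (ρ : ℝ) : ℝ :=
  sInf {t : ℝ | ∃ Ω : Set E3, MeasurableSet Ω ∧ Ω ⊆ Λ ∧ HasFinPer Ω ∧
    t = ldEnergy Λ ρ Ω - muStar * vol Ω}

/-- A tetrahedron: the interior of the convex hull of four affinely independent points. -/
def IsTetra (Δ : Set E3) : Prop :=
  ∃ v : Fin 4 → E3, AffineIndependent ℝ v ∧ Δ = interior (convexHull ℝ (Set.range v))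

/-- The open cube `(-L/2, L/2)³`. -/
def cubeL (Lside : ℝ) : Set E3 := {x : E3 | ∀ i, |x i| < Lside / 2}

/-- The grand-canonical Jellium energy of point particles of charge `m` in the domain `S`
with a uniform background of density one. -/
def pointJellium (m : ℝ) (S : Set E3) : ℝ :=
  sInf {t : ℝ | ∃ (n : ℕ) (x : Fin n → E3), (∀ j, x j ∈ S) ∧
    t = (∑ j : Fin n, ∑ k : Fin n, if j < k then m^2 / ‖x j - x k‖ else 0)
      - m * (∑ j : Fin n, ∫ y in S, 1 / ‖x j - y‖)
      + (1/2) * ∫ x' in S, ∫ y in S, 1 / ‖x' - y‖}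

/-- The conclusions of the decomposition theorem for minimizing sequences. -/
def IsDecomp (Ω : ℕ → Set E3) (m : ℝ) (K : ℕ) (Ωs : Fin K → Set E3)
    (a : ℕ → Fin K → E3) (R : ℝ) (φ : ℕ → ℕ) : Prop :=
  StrictMono φ ∧ 0 < R ∧
  (∀ j k : Fin K, j ≠ k → Tendsto (fun n => ‖a n j - a n k‖) atTop atTop) ∧
  (∀ j, IsMinimizer (Ωs j)) ∧
  (∀ j, mStarStar ≤ vol (Ωs j) ∧ vol (Ωs j) ≤ mStar) ∧
  (∀ j, Tendsto
    (fun n => volume (symmDiff ({x : E3 | x + a n j ∈ Ω (φ n)} ∩ ball (0:E3) R) (Ωs j)))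
    atTop (𝓝 0)) ∧
  Tendsto (fun n => volume (Ω (φ n) \ ⋃ j, ball (a n j) R)) atTop (𝓝 0) ∧
  Tendsto (fun n => per (Ω (φ n) \ ⋃ j, ball (a n j) R)) atTop (𝓝 0) ∧
  m = ∑ j, vol (Ωs j) ∧
  (2 ≤ K → ∃ ε : ℕ → ℝ, Tendsto ε atTop (𝓝 0) ∧ ∀ n : ℕ,
    muStar * vol (Ω (φ n)) +
      (∑ j : Fin K, ∑ k : Fin K,
        if j < k then (vol (Ωs j) * vol (Ωs k) + ε n) / ‖a n j - a n k‖ else 0)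
      ≤ II (Ω (φ n)))

instance : MeasurableSpace (Matrix (Fin 3) (Fin 3) ℝ) :=
  (inferInstance : MeasurableSpace (Fin 3 → Fin 3 → ℝ))

/-- The rotation group SO(3), as a set of matrices. -/
def SO3 : Set (Matrix (Fin 3) (Fin 3) ℝ) := {R | R * R.transpose = 1 ∧ R.det = 1}

/-- The action of a matrix on Euclidean space. -/
def rot (R : Matrix (Fin 3) (Fin 3) ℝ) (x : E3) : E3 :=
  (EuclideanSpace.equiv (Fin 3) ℝ).symm (R.mulVec (EuclideanSpace.equiv (Fin 3) ℝ x))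

/-- The image of a set under the rigid motion `x ↦ Rx + τ`. -/
def rigidImage (R : Matrix (Fin 3) (Fin 3) ℝ) (τ : E3) (S : Set E3) : Set E3 :=
  (fun x => rot R x + τ) '' S

/-- `μ` is the normalized Haar measure of SO(3): a probability measure concentrated on SO(3)
which is invariant under left multiplication by rotations. -/
def IsHaarSO3 (μ : Measure (Matrix (Fin 3) (Fin 3) ℝ)) : Prop :=
  IsProbabilityMeasure μ ∧ μ SO3ᶜ = 0 ∧ ∀ S ∈ SO3, Measure.map (fun R => S * R) μ = μ

/-- The cube of the tiling of side length `ε` indexed by `z ∈ ℤ³`. -/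
def cubeZ (ε : ℝ) (z : Fin 3 → ℤ) : Set E3 := {x : E3 | ∀ i, |x i - ε * (z i : ℝ)| < ε / 2}

/-- The distance between two sets. -/
def setDist (s t : Set E3) : ℝ := sInf {d : ℝ | ∃ p ∈ s, ∃ q ∈ t, d = dist p q}

/-- The outer cubic boundary layer of `Λ` at scale `ε`. -/
def outerLayer (Λ : Set E3) (ε : ℝ) : Set E3 :=
  ⋃ z ∈ {z : Fin 3 → ℤ | setDist (cubeZ ε z) (frontier Λ) ≤ ε}, closure (cubeZ ε z \ Λ)

/-- A point of density `d ∈ {0,1}` of a set. -/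
def densityAt (S : Set E3) (x : E3) (d : ℝ≥0∞) : Prop :=
  Tendsto (fun r : ℝ => volume (S ∩ ball x r) / volume (ball x r)) (𝓝[>] 0) (𝓝 d)

/-- The essential boundary of a set: the points where the density is neither `0` nor `1`. -/
def essBdry (S : Set E3) : Set E3 := {x : E3 | ¬ densityAt S x 0 ∧ ¬ densityAt S x 1}

/-!
The identity `1_{Λ∖Ω} - ρ 1_Λ = -(1_Ω - (1 - ρ) 1_Λ)` shows that the two Coulomb energies agree, so
the theorem amounts to `Per (Λ∖Ω) = Per Λ + Per Ω`. Pairing a test field with `1_{Λ∖Ω} = 1_Λ - 1_Ω`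
gives `P_Λ ≤ P_{Λ∖Ω} + P_Ω` and `P_Ω ≤ P_{Λ∖Ω} + P_Λ` for the perimeter measures `P_A = |D 1_A|`.
If `P_Λ` and `P_Ω` are mutually singular, then adding the first inequality on a set carrying `P_Λ`
to the second on the complement, which carries `P_Ω`, yields the lower bound; the upper bound always
holds.

Mutual singularity follows once `P_A` is concentrated on the essential boundary of `A` and vanishes
on `𝓗^{n-1}`-null sets, and neither fact requires De Giorgi's structure theorem. Both rest on one
estimate: if `η` is a cutoff equal to `1` near a compact set `K`, then replacing a test field `φ` by
`(1 - η) φ` changes its flux by at most `C ∫_A η + ∫_A |Dη|`, so `P_A(K)` is bounded by `∫_A |Dη|`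
for cutoffs with `∫_A η` arbitrarily small. For an `𝓗^{n-1}`-null set the cutoff comes from a cover
by small balls. For points of density `0` it is a cutoff at distance `r` from `K`, and the volume of
`A` in the `r`-neighbourhood of `K` is small compared with `r` because of the translation bound
`|A ∖ (A - h)| ≤ Per(A) |h|`. Points of density `1` reduce to density `0` by passing to the
complement.
-/

open scoped Convolution

theorem indicator_sdiff_sub_mul_indicator {X R : Type*} [CommRing R] {s t : Set X} (h : s ⊆ t)
    (c : R) (x : X) :
    (t \ s).indicator (fun _ ↦ (1 : R)) x - c * t.indicator (fun _ ↦ (1 : R)) x =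
      -(s.indicator (fun _ ↦ (1 : R)) x - (1 - c) * t.indicator (fun _ ↦ (1 : R)) x) := by
  rw [indicator_sdiff h, Pi.sub_apply]
  ring

theorem norm_setIntegral_le_of_support_subset {X F : Type*} [MeasurableSpace X] {μ : Measure X}
    [NormedAddCommGroup F] [NormedSpace ℝ F] {f : X → F} {s t : Set X} {C : ℝ}
    (ht : MeasurableSet t) (hμ : μ (s ∩ t) < ∞) (hf : f.support ⊆ t) (hC : ∀ x, ‖f x‖ ≤ C) :
    ‖∫ x in s, f x ∂μ‖ ≤ C * μ.real (s ∩ t) := by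
  rw [← indicator_eq_self.mpr hf, setIntegral_indicator ht]
  exact norm_setIntegral_le_of_norm_le_const hμ fun x _ ↦ hC x

theorem setLIntegral_measure_inter_preimage_add {G : Type*} [Add G] [MeasurableSpace G]
    [MeasurableAdd₂ G] {μ : Measure G} [SFinite μ] {C : Set G} (A B : Set G)
    (hC : MeasurableSet C) :
    ∫⁻ h in B, μ (A ∩ (· + h) ⁻¹' C) ∂μ = ∫⁻ x in A, μ (B ∩ (x + ·) ⁻¹' C) ∂μ := by
  have hmeas : Measurable fun p : G × G ↦ C.indicator (1 : G → ℝ≥0∞) (p.2 + p.1) :=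
    (measurable_one.indicator hC).comp (measurable_snd.add measurable_fst)
  calc ∫⁻ h in B, μ (A ∩ (· + h) ⁻¹' C) ∂μ
      = ∫⁻ h in B, ∫⁻ x in A, C.indicator 1 (x + h) ∂μ ∂μ := by
        refine lintegral_congr fun h ↦ ?_
        have hCh : MeasurableSet ((· + h) ⁻¹' C) := measurable_add_const h hC
        rw [inter_comm, ← Measure.restrict_apply hCh, ← lintegral_indicator_one hCh]
        rfl
    _ = ∫⁻ x in A, ∫⁻ h in B, C.indicator 1 (x + h) ∂μ ∂μ :=
        lintegral_lintegral_swap hmeas.aemeasurable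
    _ = ∫⁻ x in A, μ (B ∩ (x + ·) ⁻¹' C) ∂μ := by
        refine lintegral_congr fun x ↦ ?_
        have hCx : MeasurableSet ((x + ·) ⁻¹' C) := measurable_const_add x hC
        rw [inter_comm, ← Measure.restrict_apply hCx, ← lintegral_indicator_one hCx]
        rfl

theorem separatedNhds_of_areSeparated {X : Type*} [PseudoEMetricSpace X] {s t : Set X}
    (h : AreSeparated s t) : SeparatedNhds s t := by
  obtain ⟨r, hr, hst⟩ := h
  refine ⟨⋃ x ∈ s, Metric.eball x (r / 2), ⋃ y ∈ t, Metric.eball y (r / 2),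
    isOpen_biUnion fun x _ ↦ Metric.isOpen_eball, isOpen_biUnion fun y _ ↦ Metric.isOpen_eball,
    fun x hx ↦ mem_biUnion hx (Metric.mem_eball_self (ENNReal.half_pos hr)),
    fun y hy ↦ mem_biUnion hy (Metric.mem_eball_self (ENNReal.half_pos hr)), ?_⟩
  simp only [disjoint_iUnion_left, disjoint_iUnion_right]
  intro x hx y hy
  exact Metric.eball_disjoint ((ENNReal.add_halves r).trans_le (hst _ ‹_› _ ‹_›))

theorem exists_nnreal_gt_rpow_lt {a b c : ℝ≥0∞} {d : ℝ} (hab : a < b) (hc : a ^ d < c) :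
    ∃ r : ℝ≥0, a < r ∧ r < b ∧ (r : ℝ≥0∞) ^ d < c := by
  obtain ⟨b', hab', hb'⟩ := exists_between hab
  have : (𝓝[>] a).NeBot := nhdsGT_neBot_of_exists_gt ⟨b, hab⟩
  have hcont : Tendsto (fun r : ℝ≥0∞ ↦ r ^ d) (𝓝[>] a) (𝓝 (a ^ d)) :=
    ENNReal.continuous_rpow_const.continuousWithinAt
  obtain ⟨r, hr, hrc⟩ := (Filter.Eventually.and (Ioo_mem_nhdsGT hab')
    (hcont.eventually_lt_const hc)).exists
  lift r to ℝ≥0 using (hr.2.trans hb').ne_top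
  exact ⟨r, hr.1, hr.2.trans hb', hrc⟩

section HausdorffCover

variable {X : Type*} [MetricSpace X] [MeasurableSpace X] [BorelSpace X] {d : ℝ} {K : Set X}

theorem exists_ball_cover_of_hausdorffMeasure_eq_zero (hK : μH[d] K = 0) {δ ε : ℝ≥0∞}
    (hδ : δ ≠ 0) (hδ' : δ ≠ ∞) (hε : ε ≠ 0) :
    ∃ (N : Set ℕ) (x : N → X) (r : N → ℝ≥0), (∀ n, 0 < r n ∧ r n < δ) ∧
      K ⊆ ⋃ n, ball (x n) (r n) ∧ ∑' n, (r n : ℝ≥0∞) ^ d < ε := by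
  obtain ⟨S, hKS, hSδ, hSε⟩ : ∃ S : ℕ → Set X, K ⊆ ⋃ n, S n ∧ (∀ n, ediam (S n) ≤ δ / 2) ∧
      ∑' n, ⨆ _ : (S n).Nonempty, ediam (S n) ^ d < ε / 2 := by
    have h := (Measure.hausdorffMeasure_apply d K).symm.trans hK
    simp only [ENNReal.iSup_eq_zero] at h
    simpa only [iInf_lt_iff, exists_prop] using
      (h (δ / 2) (ENNReal.half_pos hδ)).trans_lt (ENNReal.half_pos hε)
  obtain ⟨e, he0, heε⟩ := ENNReal.exists_pos_sum_of_countable' (ENNReal.half_pos hε).ne' ℕ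
  set N : Set ℕ := {n | (S n).Nonempty}
  have hsum : ∑' n : N, ediam (S n) ^ d < ε / 2 := by
    have hpos (n : N) : ediam (S n) ^ d = ⨆ _ : (S n).Nonempty, ediam (S n) ^ d :=
      (iSup_pos (f := fun _ : (S n).Nonempty ↦ ediam (S n) ^ d) n.2).symm
    rw [tsum_congr hpos]
    exact (ENNReal.tsum_comp_le_tsum_of_injective Subtype.val_injective _).trans_lt hSε
  have hr (n : N) : ∃ r : ℝ≥0, ediam (S n) < r ∧ r < δ ∧
      (r : ℝ≥0∞) ^ d < ediam (S n) ^ d + e n := by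
    refine exists_nnreal_gt_rpow_lt ((hSδ n).trans_lt (ENNReal.half_lt_self hδ hδ')) ?_
    exact ENNReal.lt_add_right (ENNReal.ne_top_of_tsum_ne_top hsum.ne_top n) (he0 n).ne'
  choose r hSr hrδ hrd using hr
  choose x hx using fun n : N ↦ n.2
  refine ⟨N, x, r, fun n ↦ ⟨ENNReal.coe_pos.mp (pos_of_gt (hSr n)), hrδ n⟩, fun y hy ↦ ?_, ?_⟩
  · obtain ⟨n, hn⟩ := mem_iUnion.mp (hKS hy)
    refine mem_iUnion.mpr ⟨⟨n, y, hn⟩, ?_⟩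
    rw [← eball_coe]
    exact (edist_le_ediam_of_mem hn (hx ⟨n, y, hn⟩)).trans_lt (hSr _)
  · calc ∑' n, (r n : ℝ≥0∞) ^ d ≤ ∑' n : N, (ediam (S n) ^ d + e n) :=
          ENNReal.tsum_le_tsum fun n ↦ (hrd n).le
      _ = ∑' n : N, ediam (S n) ^ d + ∑' n : N, e n := ENNReal.tsum_add
      _ < ε / 2 + ε / 2 := by
          exact ENNReal.add_lt_add hsum <|
            (ENNReal.tsum_comp_le_tsum_of_injective Subtype.val_injective _).trans_lt heε
      _ = ε := ENNReal.add_halves ε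

theorem exists_finset_ball_cover_of_hausdorffMeasure_eq_zero (hK : IsCompact K)
    (h0 : μH[d] K = 0) {δ ε : ℝ} (hδ : 0 < δ) (hε : 0 < ε) :
    ∃ t : Finset (X × ℝ), (∀ p ∈ t, 0 < p.2 ∧ p.2 < δ) ∧ K ⊆ ⋃ p ∈ t, ball p.1 p.2 ∧
      ∑ p ∈ t, p.2 ^ d ≤ ε := by
  classical
  obtain ⟨N, x, r, hr, hcover, hsum⟩ := exists_ball_cover_of_hausdorffMeasure_eq_zero h0
    (ENNReal.ofReal_pos.mpr hδ).ne' ENNReal.ofReal_ne_top (ENNReal.ofReal_pos.mpr hε).ne'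
  obtain ⟨s, hs⟩ := hK.elim_finite_subcover _ (fun n ↦ isOpen_ball) hcover
  refine ⟨s.image fun n ↦ (x n, (r n : ℝ)), Finset.forall_mem_image.mpr fun n _ ↦ ⟨(hr n).1, ?_⟩,
    by rwa [Finset.set_biUnion_finset_image], ?_⟩
  · exact (ENNReal.ofReal_lt_ofReal_iff hδ).mp (by simpa using (hr n).2)
  · have hpow (n : N) : ENNReal.ofReal ((r n : ℝ) ^ d) = (r n : ℝ≥0∞) ^ d := by
      rw [← ENNReal.ofReal_rpow_of_pos (NNReal.coe_pos.mpr (hr n).1), ENNReal.ofReal_coe_nnreal]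
    calc ∑ p ∈ s.image fun n ↦ (x n, (r n : ℝ)), p.2 ^ d ≤ ∑ n ∈ s, (r n : ℝ) ^ d :=
          Finset.sum_image_le_of_nonneg <|
            Finset.forall_mem_image.mpr fun n _ ↦ Real.rpow_nonneg (r n).coe_nonneg d
      _ ≤ ε := by
          rw [← ENNReal.ofReal_le_ofReal_iff hε.le,
            ENNReal.ofReal_sum_of_nonneg fun n _ ↦ Real.rpow_nonneg (r n).coe_nonneg d]
          simp only [hpow]
          exact (ENNReal.sum_le_tsum s).trans hsum.le

end HausdorffCover

section Cutoff

variable {E : Type*} [NormedAddCommGroup E] [NormedSpace ℝ E]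

/-- A smooth cutoff: a compactly supported `C¹` function with values in `[0, 1]`. -/
structure IsCutoff (η : E → ℝ) : Prop where
  contDiff : ContDiff ℝ 1 η
  hasCompactSupport : HasCompactSupport η
  mem_Icc : ∀ x, η x ∈ Icc (0 : ℝ) 1

section

variable [FiniteDimensional ℝ E] [MeasurableSpace E] [BorelSpace E] {μ : Measure E}
  [μ.IsAddHaarMeasure] (b : ContDiffBump (0 : E)) {f : E → ℝ}

theorem integrable_normed_mul_comp_sub (hf : Continuous f) (x : E) :
    Integrable (fun t ↦ b.normed μ t * f (x - t)) μ :=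
  (b.continuous_normed.mul (by fun_prop)).integrable_of_hasCompactSupport
    b.hasCompactSupport_normed.mul_right

theorem normed_convolution_mem_Icc (hf : Continuous f) (hf01 : ∀ x, f x ∈ Icc (0 : ℝ) 1) (x : E) :
    (b.normed μ ⋆[ContinuousLinearMap.lsmul ℝ ℝ, μ] f) x ∈ Icc (0 : ℝ) 1 := by
  refine ⟨integral_nonneg fun t ↦ mul_nonneg (b.nonneg_normed t) (hf01 _).1, ?_⟩
  calc ∫ t, b.normed μ t * f (x - t) ∂μ ≤ ∫ t, b.normed μ t ∂μ :=
        integral_mono (integrable_normed_mul_comp_sub b hf x) b.integrable_normed fun t ↦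
          mul_le_of_le_one_right (b.nonneg_normed t) (hf01 _).2
    _ = 1 := b.integral_normed

theorem lipschitzWith_normed_convolution {C : ℝ≥0} (hf : LipschitzWith C f) :
    LipschitzWith C (b.normed μ ⋆[ContinuousLinearMap.lsmul ℝ ℝ, μ] f) := by
  refine LipschitzWith.of_dist_le_mul fun x y ↦ ?_
  have hint := integrable_normed_mul_comp_sub (μ := μ) b hf.continuous
  calc dist (∫ t, b.normed μ t * f (x - t) ∂μ) (∫ t, b.normed μ t * f (y - t) ∂μ)
      = ‖∫ t, b.normed μ t * (f (x - t) - f (y - t)) ∂μ‖ := by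
        simp only [mul_sub, integral_sub (hint x) (hint y), dist_eq_norm]
    _ ≤ ∫ t, b.normed μ t * (C * dist x y) ∂μ := by
        refine norm_integral_le_of_norm_le (b.integrable_normed.mul_const _) ?_
        refine ae_of_all _ fun t ↦ ?_
        rw [norm_mul, Real.norm_of_nonneg (b.nonneg_normed t), ← dist_eq_norm]
        refine mul_le_mul_of_nonneg_left ?_ (b.nonneg_normed t)
        simpa using hf.dist_le_mul (x - t) (y - t)
    _ = C * dist x y := by rw [integral_mul_const, b.integral_normed, one_mul]

end

namespace IsCutoff

variable {η θ : E → ℝ}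

theorem continuous_fderiv (hη : IsCutoff η) : Continuous (fderiv ℝ η) :=
  hη.contDiff.continuous_fderiv one_ne_zero

theorem differentiableAt (hη : IsCutoff η) (x : E) : DifferentiableAt ℝ η x :=
  hη.contDiff.differentiable one_ne_zero x

theorem integrable [MeasurableSpace E] [BorelSpace E] {μ : Measure E}
    [IsFiniteMeasureOnCompacts μ] (hη : IsCutoff η) : Integrable η μ :=
  hη.contDiff.continuous.integrable_of_hasCompactSupport hη.hasCompactSupport

theorem integrable_norm_fderiv [MeasurableSpace E] [BorelSpace E] {μ : Measure E}
    [IsFiniteMeasureOnCompacts μ] (hη : IsCutoff η) : Integrable (fun x ↦ ‖fderiv ℝ η x‖) μ :=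
  hη.continuous_fderiv.norm.integrable_of_hasCompactSupport (hη.hasCompactSupport.fderiv ℝ).norm

protected theorem zero : IsCutoff (0 : E → ℝ) :=
  ⟨contDiff_const, HasCompactSupport.zero, fun _ ↦ ⟨le_rfl, zero_le_one⟩⟩

-- `η + θ - η * θ = 1 - (1 - η) * (1 - θ)` is a smooth substitute for `max η θ`.
theorem add_sub_mul (hη : IsCutoff η) (hθ : IsCutoff θ) : IsCutoff (η + θ - η * θ) where
  contDiff := (hη.contDiff.add hθ.contDiff).sub (hη.contDiff.mul hθ.contDiff)
  hasCompactSupport := by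
    simpa only [sub_eq_add_neg] using (hη.hasCompactSupport.add hθ.hasCompactSupport).add
      (hη.hasCompactSupport.mul_right (f' := θ)).neg
  mem_Icc x := by
    obtain ⟨⟨h0, h1⟩, k0, k1⟩ := hη.mem_Icc x, hθ.mem_Icc x
    simp only [Pi.sub_apply, Pi.add_apply, Pi.mul_apply]
    constructor <;> nlinarith

theorem norm_fderiv_add_sub_mul_le (hη : IsCutoff η) (hθ : IsCutoff θ) (x : E) :
    ‖fderiv ℝ (η + θ - η * θ) x‖ ≤ ‖fderiv ℝ η x‖ + ‖fderiv ℝ θ x‖ := by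
  have hderiv : fderiv ℝ (η + θ - η * θ) x =
      (1 - θ x) • fderiv ℝ η x + (1 - η x) • fderiv ℝ θ x := by
    rw [fderiv_sub ((hη.differentiableAt x).add (hθ.differentiableAt x))
      ((hη.differentiableAt x).mul (hθ.differentiableAt x)),
      fderiv_add (hη.differentiableAt x) (hθ.differentiableAt x),
      fderiv_mul (hη.differentiableAt x) (hθ.differentiableAt x)]
    module
  obtain ⟨⟨h0, h1⟩, k0, k1⟩ := hη.mem_Icc x, hθ.mem_Icc x
  rw [hderiv]
  refine (norm_add_le _ _).trans (add_le_add ?_ ?_) <;>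
  · rw [norm_smul, Real.norm_of_nonneg (by linarith)]
    exact mul_le_of_le_one_left (norm_nonneg _) (by linarith)

end IsCutoff

variable [FiniteDimensional ℝ E] {K U : Set E}

theorem exists_isCutoff_of_thickening (hK : IsCompact K) {r : ℝ} (hr : 0 < r) :
    ∃ η : E → ℝ, IsCutoff η ∧ EqOn η 1 (thickening (r / 4) K) ∧ tsupport η ⊆ thickening r K ∧
      ∀ x, ‖fderiv ℝ η x‖ ≤ 4 / r := by
  borelize E
  let μ : Measure E := Measure.addHaar
  let f : E → ℝ := fun x ↦ thickenedIndicator (by positivity : 0 < r / 4) (thickening (r / 2) K) x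
  have hf : LipschitzWith (r / 4).toNNReal⁻¹ f := lipschitzWith_thickenedIndicator _ _
  have hf01 (x : E) : f x ∈ Icc (0 : ℝ) 1 := ⟨NNReal.coe_nonneg _, thickenedIndicator_le_one _ _ x⟩
  let b : ContDiffBump (0 : E) := ⟨r / 16, r / 8, by positivity, by linarith⟩
  let η : E → ℝ := b.normed μ ⋆[ContinuousLinearMap.lsmul ℝ ℝ, μ] f
  have hη_of_ball {x : E} {c : ℝ} (h : ∀ y ∈ ball x (r / 8), f y = c) : η x = c := by
    have hx := h x (mem_ball_self (by positivity))
    exact (b.normed_convolution_eq_right fun y hy ↦ (h y hy).trans hx.symm).trans hx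
  have hη1 : EqOn η 1 (thickening (r / 4) K) := fun x hx ↦ hη_of_ball fun y hy ↦ by
    refine congrArg NNReal.toReal (thickenedIndicator_one _ _ ?_)
    refine thickening_mono (by linarith : r / 8 + r / 4 ≤ r / 2) K ?_
    exact thickening_thickening_subset _ _ K (mem_thickening_iff.mpr ⟨x, hx, hy⟩)
  have hη0 : tsupport η ⊆ cthickening (r / 8 + (r / 4 + r / 2)) K := by
    refine closure_minimal (fun x hx ↦ ?_) isClosed_cthickening
    refine thickening_subset_cthickening _ _ (thickening_thickening_subset _ _ K ?_)
    by_contra hxK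
    refine hx (hη_of_ball fun y hy ↦ ?_)
    refine congrArg NNReal.toReal (thickenedIndicator_zero _ _ fun hyK ↦ ?_)
    exact hxK (mem_thickening_iff.mpr
      ⟨y, thickening_thickening_subset _ _ K hyK, mem_ball'.mp hy⟩)
  refine ⟨η, ⟨?_, hK.cthickening.of_isClosed_subset (isClosed_tsupport _) hη0,
    normed_convolution_mem_Icc b hf.continuous hf01⟩, hη1,
    hη0.trans (cthickening_subset_thickening' hr (by linarith) K), fun x ↦ ?_⟩
  · exact b.hasCompactSupport_normed.contDiff_convolution_left _ b.contDiff_normed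
      hf.continuous.locallyIntegrable
  · have h := norm_fderiv_le_of_lipschitz ℝ (lipschitzWith_normed_convolution (μ := μ) b hf)
      (x₀ := x)
    rwa [NNReal.coe_inv, Real.coe_toNNReal _ (by positivity), inv_div] at h

theorem exists_isCutoff_of_isOpen (hK : IsCompact K) (hU : IsOpen U) (hKU : K ⊆ U) :
    ∃ η : E → ℝ, IsCutoff η ∧ η =ᶠ[𝓝ˢ K] 1 ∧ tsupport η ⊆ U := by
  obtain ⟨r, hr, hrU⟩ := hK.exists_thickening_subset_open hU hKU
  obtain ⟨η, hη, hη1, hsupp, -⟩ := exists_isCutoff_of_thickening hK hr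
  refine ⟨η, hη, hη1.eventuallyEq_of_mem ?_, hsupp.trans hrU⟩
  exact isOpen_thickening.mem_nhdsSet.mpr (self_subset_thickening (by positivity) K)

section Measure

variable [MeasurableSpace E] [BorelSpace E]

theorem exists_isCutoff_setIntegral_le (μ : Measure E) [IsFiniteMeasureOnCompacts μ] (A : Set E)
    (hK : IsCompact K) {r : ℝ} (hr : 0 < r) :
    ∃ η : E → ℝ, IsCutoff η ∧ EqOn η 1 (thickening (r / 4) K) ∧
      ∫ x in A, η x ∂μ ≤ μ.real (A ∩ thickening r K) ∧
      ∫ x in A, ‖fderiv ℝ η x‖ ∂μ ≤ 4 / r * μ.real (A ∩ thickening r K) := by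
  obtain ⟨η, hη, hη1, hsupp, hderiv⟩ := exists_isCutoff_of_thickening hK hr
  have hfin : μ (A ∩ thickening r K) < ∞ :=
    (measure_mono inter_subset_right).trans_lt hK.isBounded.thickening.measure_lt_top
  have hbound {f : E → ℝ} {C : ℝ} (hf : f.support ⊆ tsupport η) (hC : ∀ x, ‖f x‖ ≤ C) :
      ∫ x in A, f x ∂μ ≤ C * μ.real (A ∩ thickening r K) :=
    (Real.le_norm_self _).trans <| norm_setIntegral_le_of_support_subset
      isOpen_thickening.measurableSet hfin (hf.trans hsupp) hC
  refine ⟨η, hη, hη1, (hbound (subset_tsupport η) fun x ↦ ?_).trans_eq (one_mul _),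
    hbound ?_ fun x ↦ (norm_norm _).trans_le (hderiv x)⟩
  · rw [Real.norm_of_nonneg (hη.mem_Icc x).1]
    exact (hη.mem_Icc x).2
  · exact (Function.support_comp_subset norm_zero _).trans (support_fderiv_subset ℝ)

theorem exists_isCutoff_ball (μ : Measure E) [IsFiniteMeasureOnCompacts μ] (c : E) {r : ℝ}
    (hr : 0 < r) :
    ∃ η : E → ℝ, IsCutoff η ∧ EqOn η 1 (ball c r) ∧ ∫ x, η x ∂μ ≤ μ.real (ball c (2 * r)) ∧
      ∫ x, ‖fderiv ℝ η x‖ ∂μ ≤ 4 / r * μ.real (ball c (2 * r)) := by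
  obtain ⟨η, hη, hη1, hint, hint'⟩ :=
    exists_isCutoff_setIntegral_le μ univ (isCompact_closedBall c r) hr
  rw [setIntegral_univ, univ_inter, thickening_closedBall hr hr.le, ← two_mul] at hint hint'
  exact ⟨η, hη, hη1.mono <| ball_subset_closedBall.trans
    (self_subset_thickening (by positivity) _), hint, hint'⟩

theorem exists_isCutoff_biUnion_ball (μ : Measure E) [IsFiniteMeasureOnCompacts μ]
    (t : Finset (E × ℝ)) (ht : ∀ p ∈ t, 0 < p.2) :
    ∃ η : E → ℝ, IsCutoff η ∧ EqOn η 1 (⋃ p ∈ t, ball p.1 p.2) ∧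
      ∫ x, η x ∂μ ≤ ∑ p ∈ t, μ.real (ball p.1 (2 * p.2)) ∧
      ∫ x, ‖fderiv ℝ η x‖ ∂μ ≤ ∑ p ∈ t, 4 / p.2 * μ.real (ball p.1 (2 * p.2)) := by
  classical
  induction t using Finset.induction_on with
  | empty => exact ⟨0, .zero, by simp, by simp, by simp⟩
  | insert p t hp ih =>
    obtain ⟨η, hη, hη1, hηi, hηd⟩ := exists_isCutoff_ball μ p.1 (ht p (Finset.mem_insert_self p t))
    obtain ⟨θ, hθ, hθ1, hθi, hθd⟩ := ih fun q hq ↦ ht q (Finset.mem_insert_of_mem hq)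
    refine ⟨η + θ - η * θ, hη.add_sub_mul hθ, ?_, ?_, ?_⟩
    · rw [Finset.set_biUnion_insert]
      rintro x (hx | hx)
      · simp [hη1 hx]
      · simp [hθ1 hx]
    · rw [Finset.sum_insert hp]
      refine le_trans ?_ (add_le_add hηi hθi)
      rw [← integral_add hη.integrable hθ.integrable]
      refine integral_mono (hη.add_sub_mul hθ).integrable (hη.integrable.add hθ.integrable) ?_
      exact fun x ↦ sub_le_self _ (mul_nonneg (hη.mem_Icc x).1 (hθ.mem_Icc x).1)
    · rw [Finset.sum_insert hp]
      refine le_trans ?_ (add_le_add hηd hθd)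
      rw [← integral_add hη.integrable_norm_fderiv hθ.integrable_norm_fderiv]
      exact integral_mono (hη.add_sub_mul hθ).integrable_norm_fderiv
        (hη.integrable_norm_fderiv.add hθ.integrable_norm_fderiv)
        (hη.norm_fderiv_add_sub_mul_le hθ)

end Measure

end Cutoff

section Divergence

variable {E : Type*} [NormedAddCommGroup E] [NormedSpace ℝ E]

/-- The divergence of a vector field on a finite-dimensional space: the trace of its derivative. -/
def divergence (φ : E → E) (x : E) : ℝ :=
  LinearMap.trace ℝ E (fderiv ℝ φ x : E →ₗ[ℝ] E)

variable {φ ψ : E → E} {η : E → ℝ} {x : E}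

theorem divergence_add (hφ : DifferentiableAt ℝ φ x) (hψ : DifferentiableAt ℝ ψ x) :
    divergence (φ + ψ) x = divergence φ x + divergence ψ x := by
  simp only [divergence, fderiv_add hφ hψ, ContinuousLinearMap.toLinearMap_add, map_add]

theorem divergence_neg (φ : E → E) (x : E) : divergence (-φ) x = -divergence φ x := by
  simp only [divergence, fderiv_neg, ContinuousLinearMap.toLinearMap_neg, map_neg]

theorem support_divergence_subset (φ : E → E) : (divergence φ).support ⊆ tsupport φ := by
  refine Subset.trans (fun x hx ↦ ?_) (support_fderiv_subset ℝ (f := φ))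
  contrapose! hx
  simp [divergence, Function.notMem_support.mp hx]

variable [FiniteDimensional ℝ E]

theorem divergence_smul (hη : DifferentiableAt ℝ η x) (hφ : DifferentiableAt ℝ φ x) :
    divergence (η • φ) x = η x * divergence φ x + fderiv ℝ η x (φ x) := by
  have htrace := LinearMap.trace_smulRight (fderiv ℝ η x : E →ₗ[ℝ] ℝ) (φ x)
  rw [divergence, fderiv_smul hη hφ, ContinuousLinearMap.toLinearMap_add, map_add,
    ContinuousLinearMap.toLinearMap_smul, map_smul]
  exact congrArg _ htrace

theorem divergence_smul_const (hη : DifferentiableAt ℝ η x) (v : E) :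
    divergence (fun y ↦ η y • v) x = fderiv ℝ η x v := by
  refine (divergence_smul hη (differentiableAt_const v)).trans ?_
  simp [divergence]

theorem continuous_divergence (hφ : ContDiff ℝ 1 φ) : Continuous (divergence φ) :=
  (((LinearMap.trace ℝ E).comp
      (ContinuousLinearMap.coeLM ℝ)).continuous_of_finiteDimensional).comp
    (hφ.continuous_fderiv one_ne_zero)

variable [MeasurableSpace E] [BorelSpace E] {μ : Measure E}

theorem integrable_divergence [IsFiniteMeasureOnCompacts μ] (hφ : ContDiff ℝ 1 φ)
    (hφc : HasCompactSupport φ) : Integrable (divergence φ) μ :=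
  (continuous_divergence hφ).integrable_of_hasCompactSupport <|
    hφc.mono' (support_divergence_subset φ)

theorem integral_fderiv_eq_zero [μ.IsAddHaarMeasure] {F : Type*} [NormedAddCommGroup F]
    [NormedSpace ℝ F] [CompleteSpace F] {f : E → F} (hf : ContDiff ℝ 1 f)
    (hfc : HasCompactSupport f) : ∫ x, fderiv ℝ f x ∂μ = 0 := by
  have hint : Integrable (fderiv ℝ f) μ :=
    (hf.continuous_fderiv one_ne_zero).integrable_of_hasCompactSupport (hfc.fderiv ℝ)
  have hint' : Integrable f μ := hf.continuous.integrable_of_hasCompactSupport hfc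
  ext v
  have h := integral_smul_fderiv_eq_neg_fderiv_smul_of_integrable (μ := μ)
    (f := fun _ : E ↦ (1 : ℝ)) (g := f) (v := v) (by simp)
    (by simpa using hint.apply_continuousLinearMap v) (by simpa using hint') (by fun_prop)
    fun x _ ↦ hf.differentiable one_ne_zero x
  simpa [ContinuousLinearMap.integral_apply hint] using h

theorem integral_divergence_eq_zero [μ.IsAddHaarMeasure] (hφ : ContDiff ℝ 1 φ)
    (hφc : HasCompactSupport φ) : ∫ x, divergence φ x ∂μ = 0 := by
  have hint : Integrable (fderiv ℝ φ) μ :=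
    (hφ.continuous_fderiv one_ne_zero).integrable_of_hasCompactSupport (hφc.fderiv ℝ)
  let trace : (E →L[ℝ] E) →L[ℝ] ℝ :=
    ((LinearMap.trace ℝ E).comp (ContinuousLinearMap.coeLM ℝ)).toContinuousLinearMap
  calc ∫ x, trace (fderiv ℝ φ x) ∂μ = trace (∫ x, fderiv ℝ φ x ∂μ) :=
        trace.integral_comp_comm hint
    _ = 0 := by rw [integral_fderiv_eq_zero hφ hφc, map_zero]

end Divergence

section RelPerimeter

variable {E : Type*} [NormedAddCommGroup E] [NormedSpace ℝ E]

/-- An admissible test field for the perimeter in `U`: a `C¹` vector field bounded by one whose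
support is a compact subset of `U`. -/
structure IsTestField (U : Set E) (φ : E → E) : Prop where
  contDiff : ContDiff ℝ 1 φ
  hasCompactSupport : HasCompactSupport φ
  tsupport_subset : tsupport φ ⊆ U
  norm_le_one : ∀ x, ‖φ x‖ ≤ 1

namespace IsTestField

variable {U W : Set E} {φ ψ : E → E} {η : E → ℝ}

theorem differentiableAt (hφ : IsTestField U φ) (x : E) : DifferentiableAt ℝ φ x :=
  hφ.contDiff.differentiable one_ne_zero x

theorem of_tsupport_subset (hφ : IsTestField U φ) (h : tsupport φ ⊆ W) : IsTestField W φ :=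
  ⟨hφ.contDiff, hφ.hasCompactSupport, h, hφ.norm_le_one⟩

theorem mono (hφ : IsTestField U φ) (h : U ⊆ W) : IsTestField W φ :=
  hφ.of_tsupport_subset (hφ.tsupport_subset.trans h)

protected theorem zero : IsTestField U (0 : E → E) :=
  ⟨contDiff_const, HasCompactSupport.zero, by simp [tsupport], by simp⟩

protected theorem neg (hφ : IsTestField U φ) : IsTestField U (-φ) where
  contDiff := hφ.contDiff.neg
  hasCompactSupport := hφ.hasCompactSupport.neg
  tsupport_subset := by simpa only [tsupport, Function.support_neg] using hφ.tsupport_subset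
  norm_le_one x := by simpa using hφ.norm_le_one x

theorem add_of_disjoint (hφ : IsTestField U φ) (hψ : IsTestField W ψ) (h : Disjoint U W) :
    IsTestField (U ∪ W) (φ + ψ) where
  contDiff := hφ.contDiff.add hψ.contDiff
  hasCompactSupport := hφ.hasCompactSupport.add hψ.hasCompactSupport
  tsupport_subset := (tsupport_add φ ψ).trans <|
    union_subset_union hφ.tsupport_subset hψ.tsupport_subset
  norm_le_one x := by
    by_cases hx : x ∈ U
    · have hψx : ψ x = 0 := image_eq_zero_of_notMem_tsupport fun h' ↦
        disjoint_left.mp h hx (hψ.tsupport_subset h')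
      simpa [hψx] using hφ.norm_le_one x
    · have hφx : φ x = 0 := image_eq_zero_of_notMem_tsupport fun h' ↦ hx (hφ.tsupport_subset h')
      simpa [hφx] using hψ.norm_le_one x

protected theorem smul (hφ : IsTestField U φ) (hη : IsCutoff η) : IsTestField U (η • φ) where
  contDiff := hη.contDiff.smul hφ.contDiff
  hasCompactSupport := hφ.hasCompactSupport.smul_left
  tsupport_subset := (tsupport_smul_subset_right η φ).trans hφ.tsupport_subset
  norm_le_one x := by
    rw [Pi.smul_apply', norm_smul, Real.norm_of_nonneg (hη.mem_Icc x).1]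
    exact mul_le_one₀ (hη.mem_Icc x).2 (norm_nonneg _) (hφ.norm_le_one x)

theorem one_sub_smul {K : Set E} (hφ : IsTestField U φ) (hη : IsCutoff η)
    (hη1 : η =ᶠ[𝓝ˢ K] 1) : IsTestField (tsupport φ \ K) ((1 - η) • φ) where
  contDiff := by
    have hη' : ContDiff ℝ 1 (1 - η) := contDiff_const.sub hη.contDiff
    exact hη'.smul hφ.contDiff
  hasCompactSupport := hφ.hasCompactSupport.smul_left
  tsupport_subset x hx := by
    refine ⟨tsupport_smul_subset_right (1 - η) φ hx, fun hxK ↦ ?_⟩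
    refine notMem_tsupport_iff_eventuallyEq.mpr ?_ (tsupport_smul_subset_left (1 - η) φ hx)
    filter_upwards [mem_nhdsSet_iff_forall.mp hη1 x hxK] with y hy using by simp [hy]
  norm_le_one x := by
    have h01 := hη.mem_Icc x
    rw [Pi.smul_apply', norm_smul, Pi.sub_apply, Pi.one_apply,
      Real.norm_of_nonneg (sub_nonneg.mpr h01.2)]
    exact mul_le_one₀ (sub_le_self _ h01.1) (norm_nonneg _) (hφ.norm_le_one x)

theorem comp_sub_smul {g : E → ℝ} (hg : ContDiff ℝ 1 g) (hgc : HasCompactSupport g)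
    (hg1 : ∀ x, ‖g x‖ ≤ 1) (x : E) {v : E} (hv : ‖v‖ ≤ 1) :
    IsTestField univ fun t ↦ g (x - t) • v where
  contDiff := (hg.comp (contDiff_const.sub contDiff_id)).smul contDiff_const
  hasCompactSupport := (hgc.comp_homeomorph (Homeomorph.subLeft x)).smul_right (f' := fun _ ↦ v)
  tsupport_subset := subset_univ _
  norm_le_one t := by
    rw [norm_smul]
    exact mul_le_one₀ (hg1 _) (norm_nonneg _) hv

end IsTestField

variable [MeasurableSpace E]

/-- The integral of the divergence over `A`, that is, the flux of `φ` out of `A`. -/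
def flux (μ : Measure E) (A : Set E) (φ : E → E) : ℝ :=
  ∫ x in A, divergence φ x ∂μ

/-- The perimeter of `A` relative to `U`, meaningful for `U` open: the total variation in `U` of
the distributional derivative of the indicator of `A`. -/
def relPerimeter (μ : Measure E) (A U : Set E) : ℝ≥0∞ :=
  ⨆ (φ : E → E) (_ : IsTestField U φ), ENNReal.ofReal (flux μ A φ)

variable {μ : Measure E} {A B U W : Set E} {φ ψ : E → E} {η : E → ℝ}

theorem flux_neg (μ : Measure E) (A : Set E) (φ : E → E) : flux μ A (-φ) = -flux μ A φ := by
  simp only [flux, divergence_neg, integral_neg]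

theorem ofReal_flux_le_relPerimeter (hφ : IsTestField U φ) :
    ENNReal.ofReal (flux μ A φ) ≤ relPerimeter μ A U :=
  le_iSup₂_of_le φ hφ le_rfl

theorem IsTestField.abs_flux_le (hφ : IsTestField U φ) (hA : relPerimeter μ A U ≠ ∞) :
    |flux μ A φ| ≤ (relPerimeter μ A U).toReal := by
  refine abs_le'.mpr ⟨(ENNReal.ofReal_le_iff_le_toReal hA).mp (ofReal_flux_le_relPerimeter hφ), ?_⟩
  rw [← flux_neg]
  exact (ENNReal.ofReal_le_iff_le_toReal hA).mp (ofReal_flux_le_relPerimeter hφ.neg)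

@[gcongr]
theorem relPerimeter_mono (h : U ⊆ W) : relPerimeter μ A U ≤ relPerimeter μ A W :=
  iSup₂_le fun _ hφ ↦ ofReal_flux_le_relPerimeter (hφ.mono h)

theorem relPerimeter_empty : relPerimeter μ A ∅ = 0 := by
  refine le_antisymm (iSup₂_le fun φ hφ ↦ ?_) zero_le
  have hφ0 : φ = 0 := tsupport_eq_empty_iff.mp (subset_empty_iff.mp hφ.tsupport_subset)
  simp [flux, divergence, hφ0]

variable [FiniteDimensional ℝ E] [BorelSpace E]

namespace IsTestField

theorem integrable_divergence [IsFiniteMeasureOnCompacts μ] (hφ : IsTestField U φ) :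
    Integrable (divergence φ) μ :=
  _root_.integrable_divergence hφ.contDiff hφ.hasCompactSupport

theorem flux_add [IsFiniteMeasureOnCompacts μ] (hφ : IsTestField U φ) (hψ : IsTestField W ψ) :
    flux μ A (φ + ψ) = flux μ A φ + flux μ A ψ := by
  simp only [flux, divergence_add (hφ.differentiableAt _) (hψ.differentiableAt _)]
  exact integral_add hφ.integrable_divergence.integrableOn hψ.integrable_divergence.integrableOn

theorem flux_eq_smul_add_one_sub_smul [IsFiniteMeasureOnCompacts μ] (hφ : IsTestField U φ)
    (hη : IsCutoff η) : flux μ A φ = flux μ A (η • φ) + flux μ A ((1 - η) • φ) := by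
  have hsplit : φ = η • φ + (1 - η) • φ := funext fun x ↦ by simp [sub_smul]
  conv_lhs => rw [hsplit]
  exact (hφ.smul hη).flux_add (hφ.one_sub_smul hη (K := ∅) (by simp [EventuallyEq]))

theorem exists_flux_smul_le [IsFiniteMeasureOnCompacts μ] (hφ : IsTestField U φ) :
    ∃ C, ∀ η : E → ℝ, IsCutoff η →
      flux μ A (η • φ) ≤ C * ∫ x in A, η x ∂μ + ∫ x in A, ‖fderiv ℝ η x‖ ∂μ := by
  obtain ⟨C, hC⟩ := (continuous_divergence hφ.contDiff).bounded_above_of_compact_support <|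
    hφ.hasCompactSupport.mono' (support_divergence_subset φ)
  refine ⟨C, fun η hη ↦ ?_⟩
  rw [← integral_const_mul, ← integral_add (hη.integrable.integrableOn.const_mul C)
    hη.integrable_norm_fderiv.integrableOn]
  refine integral_mono (hφ.smul hη).integrable_divergence.integrableOn
    ((hη.integrable.integrableOn.const_mul C).add hη.integrable_norm_fderiv.integrableOn)
    fun x ↦ ?_
  calc divergence (η • φ) x = η x * divergence φ x + fderiv ℝ η x (φ x) :=
        divergence_smul (hη.differentiableAt x) (hφ.differentiableAt x)
    _ ≤ η x * C + ‖fderiv ℝ η x‖ * 1 := by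
        refine add_le_add (mul_le_mul_of_nonneg_left ((Real.le_norm_self _).trans (hC x))
          (hη.mem_Icc x).1) ((Real.le_norm_self _).trans ?_)
        exact (fderiv ℝ η x).le_opNorm_of_le (hφ.norm_le_one x)
    _ = C * η x + ‖fderiv ℝ η x‖ := by ring

theorem flux_compl [μ.IsAddHaarMeasure] (hφ : IsTestField U φ) (hA : MeasurableSet A) :
    flux μ Aᶜ φ = -flux μ A φ := by
  have h := integral_add_compl hA (hφ.integrable_divergence (μ := μ))
  rw [integral_divergence_eq_zero (μ := μ) hφ.contDiff hφ.hasCompactSupport] at h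
  exact eq_neg_of_add_eq_zero_right h

theorem flux_sdiff [IsFiniteMeasureOnCompacts μ] (hφ : IsTestField U φ) (hB : MeasurableSet B)
    (hBA : B ⊆ A) : flux μ (A \ B) φ = flux μ A φ - flux μ B φ :=
  setIntegral_sdiff hB hφ.integrable_divergence.integrableOn hBA

end IsTestField

theorem relPerimeter_compl [μ.IsAddHaarMeasure] (hA : MeasurableSet A) (U : Set E) :
    relPerimeter μ Aᶜ U = relPerimeter μ A U := by
  refine le_antisymm (iSup₂_le fun φ hφ ↦ ?_) (iSup₂_le fun φ hφ ↦ ?_)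
  · rw [hφ.flux_compl hA, ← flux_neg]
    exact ofReal_flux_le_relPerimeter hφ.neg
  · rw [← neg_neg (flux μ A φ), ← hφ.flux_compl hA, ← flux_neg]
    exact ofReal_flux_le_relPerimeter hφ.neg

variable [IsFiniteMeasureOnCompacts μ]

theorem relPerimeter_add_le (h : Disjoint U W) :
    relPerimeter μ A U + relPerimeter μ A W ≤ relPerimeter μ A (U ∪ W) := by
  refine ENNReal.biSup_add_biSup_le' ⟨0, .zero⟩ ⟨0, .zero⟩ fun φ hφ ψ hψ ↦ ?_
  rcases le_total (flux μ A φ) 0 with hφ0 | hφ0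
  · rw [ENNReal.ofReal_of_nonpos hφ0, zero_add]
    exact (ofReal_flux_le_relPerimeter hψ).trans (relPerimeter_mono subset_union_right)
  rcases le_total (flux μ A ψ) 0 with hψ0 | hψ0
  · rw [ENNReal.ofReal_of_nonpos hψ0, add_zero]
    exact (ofReal_flux_le_relPerimeter hφ).trans (relPerimeter_mono subset_union_left)
  rw [← ENNReal.ofReal_add hφ0 hψ0, ← hφ.flux_add hψ]
  exact ofReal_flux_le_relPerimeter (hφ.add_of_disjoint hψ h)

theorem relPerimeter_union_le (hU : IsOpen U) (hW : IsOpen W) :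
    relPerimeter μ A (U ∪ W) ≤ relPerimeter μ A U + relPerimeter μ A W := by
  refine iSup₂_le fun φ hφ ↦ ?_
  obtain ⟨η, hη, hη1, hηU⟩ := exists_isCutoff_of_isOpen (hφ.hasCompactSupport.isCompact.diff hW)
    hU fun x hx ↦ (hφ.tsupport_subset hx.1).resolve_right hx.2
  have hφU : IsTestField U (η • φ) :=
    (hφ.smul hη).of_tsupport_subset ((tsupport_smul_subset_left η φ).trans hηU)
  have hφW : IsTestField W ((1 - η) • φ) :=
    (hφ.one_sub_smul hη hη1).mono fun x hx ↦ by_contra fun hxW ↦ hx.2 ⟨hx.1, hxW⟩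
  rw [hφ.flux_eq_smul_add_one_sub_smul hη]
  exact ENNReal.ofReal_add_le.trans <|
    add_le_add (ofReal_flux_le_relPerimeter hφU) (ofReal_flux_le_relPerimeter hφW)

theorem relPerimeter_le_sdiff_add {K : Set E} {c : ℝ}
    (h : ∀ ε > 0, ∃ η : E → ℝ, IsCutoff η ∧ η =ᶠ[𝓝ˢ K] 1 ∧
      ∫ x in A, η x ∂μ ≤ ε ∧ ∫ x in A, ‖fderiv ℝ η x‖ ∂μ ≤ c) :
    relPerimeter μ A U ≤ relPerimeter μ A (U \ K) + ENNReal.ofReal c := by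
  refine iSup₂_le fun φ hφ ↦ ENNReal.le_of_forall_pos_le_add fun δ hδ _ ↦ ?_
  obtain ⟨C, hC⟩ := hφ.exists_flux_smul_le (μ := μ) (A := A)
  have hC0 : 0 < |C| + 1 := by positivity
  obtain ⟨η, hη, hη1, hηε, hηc⟩ := h (δ / (|C| + 1)) (by positivity)
  have hsmall : C * ∫ x in A, η x ∂μ ≤ δ := by
    have h0 : 0 ≤ ∫ x in A, η x ∂μ := integral_nonneg fun x ↦ (hη.mem_Icc x).1
    calc C * ∫ x in A, η x ∂μ ≤ (|C| + 1) * ∫ x in A, η x ∂μ := by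
          gcongr
          exact (le_abs_self C).trans (le_add_of_nonneg_right zero_le_one)
      _ ≤ δ := by rwa [← le_div_iff₀' hC0]
  have hφK : IsTestField (U \ K) ((1 - η) • φ) :=
    (hφ.one_sub_smul hη hη1).mono (sdiff_subset_sdiff_left hφ.tsupport_subset)
  calc ENNReal.ofReal (flux μ A φ)
      ≤ ENNReal.ofReal (flux μ A ((1 - η) • φ)) + ENNReal.ofReal (c + δ) := by
        rw [hφ.flux_eq_smul_add_one_sub_smul hη, add_comm]
        refine ENNReal.ofReal_add_le.trans (add_le_add_right (ENNReal.ofReal_le_ofReal ?_) _)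
        linarith [hC η hη]
    _ ≤ relPerimeter μ A (U \ K) + (ENNReal.ofReal c + δ) := by
        gcongr
        · exact ofReal_flux_le_relPerimeter hφK
        · exact ENNReal.ofReal_add_le.trans_eq (by rw [ENNReal.ofReal_coe_nnreal])
    _ = relPerimeter μ A (U \ K) + ENNReal.ofReal c + δ := (add_assoc _ _ _).symm

theorem relPerimeter_biUnion_finset_le {ι : Type*} (s : Finset ι) {V : ι → Set E}
    (hV : ∀ i, IsOpen (V i)) :
    relPerimeter μ A (⋃ i ∈ s, V i) ≤ ∑ i ∈ s, relPerimeter μ A (V i) := by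
  classical
  induction s using Finset.induction_on with
  | empty => simp [relPerimeter_empty]
  | insert i s hi ih =>
    rw [Finset.set_biUnion_insert, Finset.sum_insert hi]
    exact (relPerimeter_union_le (hV i) (isOpen_biUnion fun j _ ↦ hV j)).trans
      (add_le_add_right ih _)

theorem relPerimeter_iUnion_le {ι : Type*} {V : ι → Set E} (hV : ∀ i, IsOpen (V i)) :
    relPerimeter μ A (⋃ i, V i) ≤ ∑' i, relPerimeter μ A (V i) := by
  refine iSup₂_le fun φ hφ ↦ ?_
  obtain ⟨s, hs⟩ := hφ.hasCompactSupport.isCompact.elim_finite_subcover V hV hφ.tsupport_subset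
  exact (ofReal_flux_le_relPerimeter (hφ.of_tsupport_subset hs)).trans <|
    (relPerimeter_biUnion_finset_le s hV).trans (ENNReal.sum_le_tsum s)

theorem relPerimeter_sdiff_le (hB : MeasurableSet B) (hBA : B ⊆ A) (U : Set E) :
    relPerimeter μ (A \ B) U ≤ relPerimeter μ A U + relPerimeter μ B U := by
  refine iSup₂_le fun φ hφ ↦ ?_
  rw [hφ.flux_sdiff hB hBA, sub_eq_add_neg, ← flux_neg]
  exact ENNReal.ofReal_add_le.trans <|
    add_le_add (ofReal_flux_le_relPerimeter hφ) (ofReal_flux_le_relPerimeter hφ.neg)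

theorem relPerimeter_left_le_sdiff_add (hB : MeasurableSet B) (hBA : B ⊆ A) (U : Set E) :
    relPerimeter μ A U ≤ relPerimeter μ (A \ B) U + relPerimeter μ B U := by
  refine iSup₂_le fun φ hφ ↦ ?_
  rw [← sub_add_cancel (flux μ A φ) (flux μ B φ), ← hφ.flux_sdiff hB hBA]
  exact ENNReal.ofReal_add_le.trans <|
    add_le_add (ofReal_flux_le_relPerimeter hφ) (ofReal_flux_le_relPerimeter hφ)

theorem relPerimeter_right_le_sdiff_add (hB : MeasurableSet B) (hBA : B ⊆ A) (U : Set E) :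
    relPerimeter μ B U ≤ relPerimeter μ (A \ B) U + relPerimeter μ A U := by
  refine iSup₂_le fun φ hφ ↦ ?_
  rw [← sub_sub_self (flux μ A φ) (flux μ B φ), ← hφ.flux_sdiff hB hBA, sub_eq_neg_add, ← flux_neg]
  exact ENNReal.ofReal_add_le.trans <|
    add_le_add (ofReal_flux_le_relPerimeter hφ.neg) (ofReal_flux_le_relPerimeter hφ)

end RelPerimeter

section PerimeterMeasure

variable {E : Type*} [NormedAddCommGroup E] [NormedSpace ℝ E] [MeasurableSpace E]

/-- The outer measure `S ↦ inf {relPerimeter μ A U | U ⊇ S open}`. -/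
def perimeterOuterMeasure (μ : Measure E) (A : Set E) : OuterMeasure E :=
  inducedOuterMeasure (fun U (_ : IsOpen U) ↦ relPerimeter μ A U) isOpen_empty relPerimeter_empty

variable [FiniteDimensional ℝ E] [BorelSpace E] {μ : Measure E} [IsFiniteMeasureOnCompacts μ]
  {A B C S U : Set E}

theorem perimeterOuterMeasure_eq_iInf (S : Set E) :
    perimeterOuterMeasure μ A S = ⨅ (U : Set E) (_ : IsOpen U) (_ : S ⊆ U), relPerimeter μ A U :=
  inducedOuterMeasure_eq_iInf (fun _ ↦ isOpen_iUnion) (fun _ h ↦ relPerimeter_iUnion_le h)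
    (fun _ _ _ _ h ↦ relPerimeter_mono h) S

theorem perimeterOuterMeasure_of_isOpen (hU : IsOpen U) :
    perimeterOuterMeasure μ A U = relPerimeter μ A U :=
  inducedOuterMeasure_eq' (fun _ ↦ isOpen_iUnion) (fun _ h ↦ relPerimeter_iUnion_le h)
    (fun _ _ _ _ h ↦ relPerimeter_mono h) hU

theorem isMetric_perimeterOuterMeasure (μ : Measure E) [IsFiniteMeasureOnCompacts μ] (A : Set E) :
    (perimeterOuterMeasure μ A).IsMetric := by
  refine fun S T hST ↦ le_antisymm (measure_union_le S T) ?_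
  obtain ⟨V, W, hV, hW, hSV, hTW, hVW⟩ := separatedNhds_of_areSeparated hST
  simp only [perimeterOuterMeasure_eq_iInf (S ∪ T), le_iInf_iff]
  intro U hU hSTU
  obtain ⟨hSU, hTU⟩ := union_subset_iff.mp hSTU
  calc perimeterOuterMeasure μ A S + perimeterOuterMeasure μ A T
      ≤ relPerimeter μ A (V ∩ U) + relPerimeter μ A (W ∩ U) := by
        rw [← perimeterOuterMeasure_of_isOpen (hV.inter hU),
          ← perimeterOuterMeasure_of_isOpen (hW.inter hU)]
        gcongr
        exacts [subset_inter hSV hSU, subset_inter hTW hTU]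
    _ ≤ relPerimeter μ A (V ∩ U ∪ W ∩ U) :=
        relPerimeter_add_le (hVW.mono inter_subset_left inter_subset_left)
    _ ≤ relPerimeter μ A U := relPerimeter_mono (union_subset inter_subset_right inter_subset_right)

/-- The perimeter measure of `A`: the total variation measure of the distributional derivative of
the indicator of `A`. -/
def perimeterMeasure (μ : Measure E) [IsFiniteMeasureOnCompacts μ] (A : Set E) : Measure E :=
  (perimeterOuterMeasure μ A).toMeasure <|
    BorelSpace.measurable_eq.trans_le (isMetric_perimeterOuterMeasure μ A).borel_le_caratheodory

theorem perimeterMeasure_eq_iInf (hS : MeasurableSet S) :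
    perimeterMeasure μ A S = ⨅ (U : Set E) (_ : IsOpen U) (_ : S ⊆ U), relPerimeter μ A U := by
  rw [perimeterMeasure, toMeasure_apply _ _ hS, perimeterOuterMeasure_eq_iInf]

theorem perimeterMeasure_of_isOpen (hU : IsOpen U) :
    perimeterMeasure μ A U = relPerimeter μ A U := by
  rw [perimeterMeasure, toMeasure_apply _ _ hU.measurableSet, perimeterOuterMeasure_of_isOpen hU]

theorem isFiniteMeasure_perimeterMeasure (hA : relPerimeter μ A univ ≠ ∞) :
    IsFiniteMeasure (perimeterMeasure μ A) :=
  ⟨by rw [perimeterMeasure_of_isOpen isOpen_univ]; exact hA.lt_top⟩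

theorem perimeterMeasure_le_add
    (h : ∀ U, relPerimeter μ A U ≤ relPerimeter μ B U + relPerimeter μ C U) (hS : MeasurableSet S) :
    perimeterMeasure μ A S ≤ perimeterMeasure μ B S + perimeterMeasure μ C S := by
  simp only [perimeterMeasure_eq_iInf hS, iInf_and']
  refine ENNReal.le_iInf₂_add_iInf₂ fun U hU V hV ↦ ?_
  refine iInf₂_le_of_le (U ∩ V) ⟨hU.1.inter hV.1, subset_inter hU.2 hV.2⟩ ((h _).trans ?_)
  gcongr
  exacts [inter_subset_left, inter_subset_right]

theorem perimeterMeasure_le_of_forall_isCutoff {K : Set E} (hK : IsCompact K)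
    (hA : relPerimeter μ A univ ≠ ∞) {c : ℝ}
    (h : ∀ ε > 0, ∃ η : E → ℝ, IsCutoff η ∧ η =ᶠ[𝓝ˢ K] 1 ∧
      ∫ x in A, η x ∂μ ≤ ε ∧ ∫ x in A, ‖fderiv ℝ η x‖ ∂μ ≤ c) :
    perimeterMeasure μ A K ≤ ENNReal.ofReal c := by
  have := isFiniteMeasure_perimeterMeasure hA
  have hle := relPerimeter_le_sdiff_add (U := univ) h
  rw [← compl_eq_univ_sdiff, ← perimeterMeasure_of_isOpen isOpen_univ,
    ← perimeterMeasure_of_isOpen hK.isClosed.isOpen_compl,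
    ← measure_add_measure_compl hK.measurableSet, add_comm] at hle
  exact (ENNReal.add_le_add_iff_left (measure_ne_top _ _)).mp hle

theorem perimeterMeasure_eq_zero_of_forall_isCompact (hA : relPerimeter μ A univ ≠ ∞)
    (hS : MeasurableSet S) (h : ∀ K ⊆ S, IsCompact K → perimeterMeasure μ A K = 0) :
    perimeterMeasure μ A S = 0 := by
  have := isFiniteMeasure_perimeterMeasure hA
  rw [hS.measure_eq_iSup_isCompact]
  simpa only [ENNReal.iSup_eq_zero] using h

end PerimeterMeasure

section AddHaar

variable {E : Type*} [NormedAddCommGroup E] [NormedSpace ℝ E] [FiniteDimensional ℝ E]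
  [MeasurableSpace E] [BorelSpace E] {μ : Measure E} [μ.IsAddHaarMeasure] {A K S : Set E} {n : ℕ}

theorem perimeterMeasure_compl (hA : MeasurableSet A) :
    perimeterMeasure μ Aᶜ = perimeterMeasure μ A :=
  Measure.ext fun S hS ↦ by simp only [perimeterMeasure_eq_iInf hS, relPerimeter_compl hA]

theorem measureReal_ball_eq (hn : Module.finrank ℝ E = n) (x : E) {r : ℝ} (hr : 0 < r) :
    μ.real (ball x r) = r ^ n * μ.real (ball 0 1) := by
  rw [measureReal_def, Measure.addHaar_ball_of_pos _ _ hr, hn, ENNReal.toReal_mul,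
    ENNReal.toReal_ofReal (by positivity), measureReal_def]

theorem exists_isCutoff_of_hausdorffMeasure_eq_zero (hn : Module.finrank ℝ E = n + 1)
    (hK : IsCompact K) (h0 : μH[n] K = 0) {ε : ℝ} (hε : 0 < ε) :
    ∃ η : E → ℝ, IsCutoff η ∧ η =ᶠ[𝓝ˢ K] 1 ∧
      ∫ x, η x ∂μ ≤ ε ∧ ∫ x, ‖fderiv ℝ η x‖ ∂μ ≤ ε := by
  set M : ℝ := 4 * (2 ^ (n + 1) * μ.real (ball (0 : E) 1)) with hM
  have hMpos : 0 < M + 1 := by positivity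
  obtain ⟨t, ht, hKt, hsum⟩ := exists_finset_ball_cover_of_hausdorffMeasure_eq_zero hK h0 one_pos
    (div_pos hε hMpos)
  obtain ⟨η, hη, hη1, hint, hint'⟩ := exists_isCutoff_biUnion_ball μ t fun p hp ↦ (ht p hp).1
  have hball : ∀ p ∈ t, μ.real (ball p.1 (2 * p.2)) = p.2 ^ (n + 1) * (M / 4) := fun p hp ↦ by
    rw [measureReal_ball_eq hn _ (mul_pos two_pos (ht p hp).1), hM]
    ring
  have hle : ∑ p ∈ t, p.2 ^ n * M ≤ ε := by
    simp only [Real.rpow_natCast] at hsum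
    rw [← Finset.sum_mul]
    calc (∑ p ∈ t, p.2 ^ n) * M ≤ ε / (M + 1) * (M + 1) := by gcongr; linarith
      _ = ε := div_mul_cancel₀ _ hMpos.ne'
  refine ⟨η, hη, ?_, ?_, ?_⟩
  · refine eventuallyEq_of_mem (mem_nhdsSet_iff_exists.mpr
      ⟨_, isOpen_biUnion fun _ _ ↦ isOpen_ball, hKt, subset_rfl⟩) hη1
  · refine hint.trans ((Finset.sum_le_sum fun p hp ↦ ?_).trans hle)
    obtain ⟨h0, h1⟩ := ht p hp
    rw [hball p hp]
    gcongr ?_ * ?_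
    · exact pow_le_pow_of_le_one h0.le h1.le n.le_succ
    · exact div_le_self (by positivity) (by norm_num)
  · refine hint'.trans ((Finset.sum_le_sum fun p hp ↦ le_of_eq ?_).trans hle)
    have hp0 := (ht p hp).1.ne'
    rw [hball p hp]
    field_simp
    ring

theorem perimeterMeasure_eq_zero_of_hausdorffMeasure_eq_zero (hn : Module.finrank ℝ E = n + 1)
    (hA : relPerimeter μ A univ ≠ ∞) (h0 : μH[n] S = 0) : perimeterMeasure μ A S = 0 := by
  obtain ⟨T, hST, hT, hT0⟩ := exists_measurable_superset_of_null h0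
  refine measure_mono_null hST <| perimeterMeasure_eq_zero_of_forall_isCompact hA hT
    fun K hKT hK ↦ nonpos_iff_eq_zero.mp <| ENNReal.le_of_forall_pos_le_add fun ε hε _ ↦ ?_
  rw [zero_add, ← ENNReal.ofReal_coe_nnreal]
  refine perimeterMeasure_le_of_forall_isCutoff hK hA fun δ hδ ↦ ?_
  obtain ⟨η, hη, hη1, hint, hint'⟩ := exists_isCutoff_of_hausdorffMeasure_eq_zero (μ := μ) hn hK
    (measure_mono_null hKT hT0) (lt_min hδ (NNReal.coe_pos.mpr hε))
  refine ⟨η, hη, hη1, ?_, ?_⟩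
  · exact (setIntegral_le_integral hη.integrable (ae_of_all _ fun x ↦ (hη.mem_Icc x).1)).trans
      (hint.trans (min_le_left _ _))
  · exact (setIntegral_le_integral hη.integrable_norm_fderiv
      (ae_of_all _ fun _ ↦ norm_nonneg _)).trans (hint'.trans (min_le_right _ _))

end AddHaar

section Translation

variable {E : Type*} [NormedAddCommGroup E] [NormedSpace ℝ E] [FiniteDimensional ℝ E]
  [MeasurableSpace E] [BorelSpace E] {μ : Measure E} [μ.IsAddHaarMeasure] {A K S : Set E}
  {g : E → ℝ}

theorem hasFDerivAt_setIntegral_comp_sub (hA : MeasurableSet A) (hg : ContDiff ℝ 1 g)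
    (hgc : HasCompactSupport g) (x : E) :
    HasFDerivAt (fun x ↦ ∫ t in A, g (x - t) ∂μ) (∫ t in A, fderiv ℝ g (x - t) ∂μ) x := by
  let L := ContinuousLinearMap.lsmul ℝ ℝ (E := ℝ)
  have hconv : (fun x ↦ ∫ t in A, g (x - t) ∂μ) = A.indicator 1 ⋆[L, μ] g := funext fun y ↦ by
    rw [convolution, ← integral_indicator hA]
    congr with t
    by_cases ht : t ∈ A <;> simp [L, ht]
  have hconv' : ∫ t in A, fderiv ℝ g (x - t) ∂μ =
      (A.indicator 1 ⋆[L.precompR E, μ] fderiv ℝ g) x := by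
    rw [convolution, ← integral_indicator hA]
    congr with t v
    by_cases ht : t ∈ A <;> simp [L, ht]
  rw [hconv, hconv']
  exact hgc.hasFDerivAt_convolution_right L ((locallyIntegrable_const (1 : ℝ)).indicator hA) hg x

theorem setIntegral_fderiv_comp_sub_apply (hg : ContDiff ℝ 1 g) (hgc : HasCompactSupport g)
    (x v : E) :
    (∫ t in A, fderiv ℝ g (x - t) ∂μ) v = -flux μ A (fun t ↦ g (x - t) • v) := by
  have hint : Integrable (fun t ↦ fderiv ℝ g (x - t)) μ :=
    ((hg.continuous_fderiv one_ne_zero).integrable_of_hasCompactSupport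
      (hgc.fderiv ℝ)).comp_sub_left x
  rw [ContinuousLinearMap.integral_apply hint.integrableOn, flux, ← integral_neg]
  refine integral_congr_ae (ae_of_all _ fun t ↦ ?_)
  have hderiv : HasFDerivAt (fun t ↦ g (x - t)) (-fderiv ℝ g (x - t)) t := by
    simpa [Function.comp_def] using (hg.differentiable one_ne_zero (x - t)).hasFDerivAt.comp t
      ((hasFDerivAt_id t).const_sub x)
  simp [divergence_smul_const hderiv.differentiableAt, hderiv.fderiv]

theorem lipschitzWith_setIntegral_comp_sub (hA : MeasurableSet A)
    (hAper : relPerimeter μ A univ ≠ ∞) (hg : ContDiff ℝ 1 g) (hgc : HasCompactSupport g)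
    (hg1 : ∀ x, ‖g x‖ ≤ 1) :
    LipschitzWith (relPerimeter μ A univ).toNNReal fun x ↦ ∫ t in A, g (x - t) ∂μ := by
  have hderiv := hasFDerivAt_setIntegral_comp_sub (μ := μ) hA hg hgc
  refine lipschitzWith_of_nnnorm_fderiv_le (fun x ↦ (hderiv x).differentiableAt) fun x ↦ ?_
  rw [(hderiv x).fderiv, ← NNReal.coe_le_coe, coe_nnnorm]
  refine ContinuousLinearMap.opNorm_le_of_unit_norm (NNReal.coe_nonneg _) fun v hv ↦ ?_
  rw [setIntegral_fderiv_comp_sub_apply hg hgc, norm_neg]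
  exact (IsTestField.comp_sub_smul hg hgc hg1 x hv.le).abs_flux_le hAper

theorem IsCutoff.setIntegral_le_add (hA : MeasurableSet A) (hAper : relPerimeter μ A univ ≠ ∞)
    {η : E → ℝ} (hη : IsCutoff η) (h : E) :
    ∫ t in A, η t ∂μ ≤ ∫ t in A, η (t - h) ∂μ + (relPerimeter μ A univ).toReal * ‖h‖ := by
  have hlip := (lipschitzWith_setIntegral_comp_sub (g := fun x ↦ η (-x)) hA hAper
    (hη.contDiff.comp contDiff_neg) (hη.hasCompactSupport.comp_homeomorph (Homeomorph.neg E))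
    fun x ↦ by
      rw [Real.norm_of_nonneg (hη.mem_Icc _).1]
      exact (hη.mem_Icc _).2).dist_le_mul 0 h
  simp only [neg_sub, sub_zero, dist_zero, Real.dist_eq, ENNReal.coe_toNNReal_eq_toReal] at hlip
  linarith [le_abs_self (∫ t in A, η t ∂μ - ∫ t in A, η (t - h) ∂μ)]

theorem measureReal_le_of_isCompact_subset_sdiff_preimage (hA : MeasurableSet A)
    (hAper : relPerimeter μ A univ ≠ ∞) {h : E} (hK : IsCompact K) (hKA : K ⊆ A \ (· + h) ⁻¹' A) :
    μ.real K ≤ (relPerimeter μ A univ).toReal * ‖h‖ := by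
  refine le_of_forall_pos_le_add fun ε hε ↦ ?_
  obtain ⟨U, hKU, hU, -, hUK⟩ := hK.measurableSet.exists_isOpen_sdiff_lt (μ := μ)
    hK.measure_ne_top (ENNReal.ofReal_pos.mpr hε).ne'
  obtain ⟨η, hη, hη1, hηU⟩ := exists_isCutoff_of_isOpen hK hU hKU
  have hlower : μ.real K ≤ ∫ t in A, η t ∂μ := calc
    μ.real K = ∫ t in K, η t ∂μ := by
      rw [setIntegral_congr_fun hK.measurableSet hη1.self_of_nhdsSet]
      simp
    _ ≤ ∫ t in A, η t ∂μ := setIntegral_mono_set hη.integrable.integrableOn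
        (ae_of_all _ fun x ↦ (hη.mem_Icc x).1) (LE.le.eventuallyLE fun x hx ↦ (hKA hx).1)
  have hupper : ∫ t in A, η (t - h) ∂μ ≤ ε := by
    have hmaps : A ∩ (· - h) ⁻¹' U ⊆ (· - h) ⁻¹' (U \ K) := fun t ht ↦
      ⟨ht.2, fun hK ↦ (hKA hK).2 (by simpa using ht.1)⟩
    have hle : μ (A ∩ (· - h) ⁻¹' U) ≤ ENNReal.ofReal ε := (measure_mono hmaps).trans <| by
      simp only [sub_eq_add_neg]
      rw [measure_preimage_add_right]
      exact hUK.le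
    calc ∫ t in A, η (t - h) ∂μ ≤ ‖∫ t in A, η (t - h) ∂μ‖ := Real.le_norm_self _
      _ ≤ 1 * μ.real (A ∩ (· - h) ⁻¹' U) :=
          norm_setIntegral_le_of_support_subset (hU.measurableSet.preimage (measurable_sub_const h))
            (hle.trans_lt ENNReal.ofReal_lt_top) (fun t ht ↦ hηU (subset_tsupport η ht)) fun t ↦ by
              rw [Real.norm_of_nonneg (hη.mem_Icc _).1]
              exact (hη.mem_Icc _).2
      _ ≤ ε := by
          rw [one_mul]
          exact ENNReal.toReal_le_of_le_ofReal hε.le hle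
  linarith [hη.setIntegral_le_add (μ := μ) hA hAper h]

theorem measure_sdiff_preimage_add_le (hA : MeasurableSet A) (h : E) :
    μ (A \ (· + h) ⁻¹' A) ≤ relPerimeter μ A univ * ‖h‖ₑ := by
  rcases eq_or_ne h 0 with rfl | hh
  · simp
  rcases eq_or_ne (relPerimeter μ A univ) ∞ with hAper | hAper
  · rw [hAper, ENNReal.top_mul (enorm_ne_zero.mpr hh)]
    exact le_top
  rw [(hA.diff (measurable_add_const h hA)).measure_eq_iSup_isCompact]
  refine iSup₂_le fun K hKA ↦ iSup_le fun hK ↦ ?_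
  rw [← ENNReal.toReal_le_toReal hK.measure_ne_top
    (ENNReal.mul_ne_top hAper enorm_ne_top), ENNReal.toReal_mul, toReal_enorm]
  exact measureReal_le_of_isCompact_subset_sdiff_preimage hA hAper hK hKA

theorem setLIntegral_measure_ball_sdiff_le (hA : MeasurableSet A) (s : ℝ) :
    ∫⁻ x in A, μ (ball x s \ A) ∂μ ≤
      relPerimeter μ A univ * ENNReal.ofReal s * μ (ball 0 s) := by
  have htranslate (x : E) : μ (ball 0 s ∩ (x + ·) ⁻¹' Aᶜ) = μ (ball x s \ A) := by
    rw [← measure_preimage_add μ x (ball x s \ A), preimage_sdiff, preimage_add_ball, sub_self]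
    rfl
  simp only [← htranslate]
  rw [← setLIntegral_measure_inter_preimage_add _ _ hA.compl]
  calc ∫⁻ h in ball 0 s, μ (A \ (· + h) ⁻¹' A) ∂μ
      ≤ ∫⁻ _ in ball (0 : E) s, relPerimeter μ A univ * ENNReal.ofReal s ∂μ := by
        refine setLIntegral_mono measurable_const fun h hh ↦
          (measure_sdiff_preimage_add_le hA h).trans ?_
        rw [← ofReal_norm]
        gcongr
        exact (mem_ball_zero_iff.mp hh).le
    _ = relPerimeter μ A univ * ENNReal.ofReal s * μ (ball 0 s) := setLIntegral_const _ _

/- Near a point of `S`, the set `A` fills at most half of any ball of radius `s`, so its complement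
fills the other half; the average over translations `|h| < s` of `μ (A \ (A - h))` then controls
the volume of `A` near `S`. -/
theorem measure_inter_thickening_le (hA : MeasurableSet A) {r s : ℝ} (hs : 0 < s) (hsr : s ≤ r)
    (hS : ∀ x ∈ S, 2 * μ (A ∩ ball x (2 * r)) ≤ μ (ball x s)) :
    μ (A ∩ thickening r S) ≤ 2 * (relPerimeter μ A univ * ENNReal.ofReal s) := by
  have hball0 : μ (ball (0 : E) s) ≠ 0 := (measure_ball_pos μ 0 hs).ne'
  have hball : μ (ball (0 : E) s) ≠ ∞ := measure_ball_lt_top.ne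
  have hhalf : ∀ y ∈ A ∩ thickening r S, μ (ball 0 s) ≤ 2 * μ (ball y s \ A) := by
    rintro y ⟨-, hy⟩
    obtain ⟨x, hx, hxy⟩ := mem_thickening_iff.mp hy
    have hsub : ball y s ⊆ ball x (2 * r) := ball_subset_ball' (by linarith)
    have hin : 2 * μ (ball y s ∩ A) ≤ μ (ball 0 s) := by
      rw [inter_comm]
      exact (by gcongr : 2 * μ (A ∩ ball y s) ≤ _).trans
        ((hS x hx).trans_eq (Measure.addHaar_ball_center μ x s))
    have hsum : 2 * μ (ball y s ∩ A) + 2 * μ (ball y s \ A) = μ (ball 0 s) + μ (ball 0 s) := by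
      rw [← mul_add, measure_inter_add_sdiff _ hA, Measure.addHaar_ball_center, two_mul]
    refine (ENNReal.add_le_add_iff_left hball).mp ?_
    rw [← hsum]
    gcongr
  refine (ENNReal.mul_le_mul_iff_left hball0 hball).mp ?_
  calc μ (A ∩ thickening r S) * μ (ball 0 s)
      = ∫⁻ _ in A ∩ thickening r S, μ (ball 0 s) ∂μ := by rw [setLIntegral_const, mul_comm]
    _ ≤ ∫⁻ y in A ∩ thickening r S, 2 * μ (ball y s \ A) ∂μ :=
        setLIntegral_mono' (hA.inter isOpen_thickening.measurableSet) hhalf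
    _ ≤ ∫⁻ y in A, 2 * μ (ball y s \ A) ∂μ := lintegral_mono_set inter_subset_left
    _ = 2 * ∫⁻ y in A, μ (ball y s \ A) ∂μ := lintegral_const_mul' _ _ ENNReal.ofNat_ne_top
    _ ≤ 2 * (relPerimeter μ A univ * ENNReal.ofReal s) * μ (ball 0 s) := by
        rw [mul_assoc]
        gcongr
        exact setLIntegral_measure_ball_sdiff_le hA s

end Translation

section Density

variable {E : Type*} [NormedAddCommGroup E] [MeasurableSpace E] {μ : Measure E} {A : Set E}
  {x : E} {d : ℝ≥0∞}

/-- `A` has density `d` at `x`, in the sense of the limit of volume fractions of small balls. -/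
def HasDensityAt (μ : Measure E) (A : Set E) (x : E) (d : ℝ≥0∞) : Prop :=
  Tendsto (fun r ↦ μ (A ∩ ball x r) / μ (ball x r)) (𝓝[>] 0) (𝓝 d)

/-- The essential boundary of `A`: the points where `A` has neither density `0` nor density `1`. -/
def essBoundary (μ : Measure E) (A : Set E) : Set E :=
  {x | ¬HasDensityAt μ A x 0 ∧ ¬HasDensityAt μ A x 1}

variable [NormedSpace ℝ E] [FiniteDimensional ℝ E] [μ.IsAddHaarMeasure]

theorem HasDensityAt.compl (hA : MeasurableSet A) (h : HasDensityAt μ A x d) :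
    HasDensityAt μ Aᶜ x (1 - d) := by
  refine (ENNReal.Tendsto.sub tendsto_const_nhds h (.inl ENNReal.one_ne_top)).congr' ?_
  filter_upwards [self_mem_nhdsWithin] with r hr
  have hball0 : μ (ball x r) ≠ 0 := (measure_ball_pos μ x hr).ne'
  have hball : μ (ball x r) ≠ ∞ := measure_ball_lt_top.ne
  have hfrac : μ (A ∩ ball x r) / μ (ball x r) ≠ ∞ :=
    ENNReal.div_ne_top (measure_ne_top_of_subset inter_subset_right hball) hball0
  refine (ENNReal.eq_sub_of_add_eq hfrac ?_).symm
  rw [← ENNReal.add_div, add_comm, inter_comm, inter_comm Aᶜ, ← sdiff_eq,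
    measure_inter_add_sdiff _ hA, ENNReal.div_self hball0 hball]

variable [BorelSpace E] {S : Set E}

theorem HasDensityAt.eventually_two_mul_measure_inter_ball_le (h : HasDensityAt μ A x 0) {τ : ℝ}
    (hτ : 0 < τ) : ∀ᶠ r in 𝓝[>] 0, 2 * μ (A ∩ ball x (2 * r)) ≤ μ (ball x (τ * r)) := by
  set c : ℝ≥0∞ := ENNReal.ofReal ((τ / 2) ^ Module.finrank ℝ E) with hc
  have hc0 : 0 < c / 2 := ENNReal.half_pos (ENNReal.ofReal_pos.mpr (by positivity)).ne'
  have htwo : Tendsto (fun r : ℝ ↦ 2 * r) (𝓝[>] 0) (𝓝[>] 0) :=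
    tendsto_nhdsWithin_iff.mpr ⟨tendsto_nhdsWithin_of_tendsto_nhds
      (by simpa using tendsto_const_nhds.mul tendsto_id (x := 𝓝 (0 : ℝ)) (a := (2 : ℝ))),
      eventually_mem_nhdsWithin.mono fun r hr ↦ mem_Ioi.mpr (mul_pos two_pos hr)⟩
  filter_upwards [htwo.eventually (h.eventually_lt_const hc0), self_mem_nhdsWithin] with r hr hr0
  have hr2 : 0 < 2 * r := mul_pos two_pos hr0
  calc 2 * μ (A ∩ ball x (2 * r)) ≤ 2 * (c / 2 * μ (ball x (2 * r))) := by
        gcongr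
        exact (ENNReal.div_le_iff (measure_ball_pos μ x hr2).ne' measure_ball_lt_top.ne).mp hr.le
    _ = c * μ (ball 0 (2 * r)) := by
        rw [← mul_assoc, ENNReal.mul_div_cancel two_ne_zero ENNReal.ofNat_ne_top,
          Measure.addHaar_ball_center]
    _ = μ (ball x (τ * r)) := by
        rw [hc, ← Measure.addHaar_ball_mul_of_pos μ x (half_pos hτ)]
        congr 2
        ring

theorem perimeterMeasure_closure_le (hA : MeasurableSet A) (hAper : relPerimeter μ A univ ≠ ∞)
    {τ r₀ : ℝ} (hτ : 0 < τ) (hτ1 : τ ≤ 1) (hr₀ : 0 < r₀)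
    (hS : ∀ x ∈ S, ∀ r ∈ Ioo 0 r₀, 2 * μ (A ∩ ball x (2 * r)) ≤ μ (ball x (τ * r))) :
    perimeterMeasure μ A (closure S) ≤
      ENNReal.ofReal (8 * τ * (relPerimeter μ A univ).toReal) := by
  have := isFiniteMeasure_perimeterMeasure hAper
  rw [isClosed_closure.measurableSet.measure_eq_iSup_isCompact]
  refine iSup₂_le fun K hKS ↦ iSup_le fun hK ↦ perimeterMeasure_le_of_forall_isCutoff hK hAper ?_
  intro ε hε
  set p := (relPerimeter μ A univ).toReal
  obtain ⟨r, hr, hrmin⟩ : ∃ r, 0 < r ∧ r < min r₀ (ε / (2 * p + 1)) :=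
    exists_between (lt_min hr₀ (by positivity))
  have hKr : thickening r K ⊆ thickening r S := by
    rw [← thickening_closure (s := S)]
    exact thickening_subset_of_subset r hKS
  have hvol : μ.real (A ∩ thickening r K) ≤ 2 * (p * (τ * r)) := by
    refine ENNReal.toReal_le_of_le_ofReal (by positivity) ?_
    rw [ENNReal.ofReal_mul two_pos.le, ENNReal.ofReal_mul ENNReal.toReal_nonneg,
      ENNReal.ofReal_toReal hAper, ENNReal.ofReal_ofNat]
    refine (measure_mono (inter_subset_inter_right A hKr)).trans ?_
    exact measure_inter_thickening_le hA (mul_pos hτ hr) (mul_le_of_le_one_left hr.le hτ1)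
      fun x hx ↦ hS x hx r ⟨hr, hrmin.trans_le (min_le_left _ _)⟩
  obtain ⟨η, hη, hη1, hint, hint'⟩ := exists_isCutoff_setIntegral_le μ A hK hr
  refine ⟨η, hη, hη1.eventuallyEq_of_mem
    (isOpen_thickening.mem_nhdsSet.mpr (self_subset_thickening (by positivity) K)), ?_, ?_⟩
  · calc ∫ x in A, η x ∂μ ≤ 2 * (p * (τ * r)) := hint.trans hvol
      _ ≤ 2 * (p * (1 * r)) := by gcongr
      _ ≤ r * (2 * p + 1) := by linarith
      _ ≤ ε := ((lt_div_iff₀ (by positivity)).mp (hrmin.trans_le (min_le_right _ _))).le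
  · calc ∫ x in A, ‖fderiv ℝ η x‖ ∂μ ≤ 4 / r * (2 * (p * (τ * r))) := hint'.trans (by gcongr)
      _ = 8 * τ * p := by
          field_simp
          ring

theorem perimeterMeasure_setOf_hasDensityAt_zero_le (hA : MeasurableSet A)
    (hAper : relPerimeter μ A univ ≠ ∞) {τ : ℝ} (hτ : 0 < τ) (hτ1 : τ ≤ 1) :
    perimeterMeasure μ A {x | HasDensityAt μ A x 0} ≤
      ENNReal.ofReal (8 * τ * (relPerimeter μ A univ).toReal) := by
  let S (k : ℕ) : Set E := {x | ∀ r ∈ Ioo (0 : ℝ) (1 / (k + 1)),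
    2 * μ (A ∩ ball x (2 * r)) ≤ μ (ball x (τ * r))}
  have hmono : Monotone fun k ↦ closure (S k) := fun k l hkl ↦ closure_mono fun x hx r hr ↦
    hx r ⟨hr.1, hr.2.trans_le (one_div_le_one_div_of_le (by positivity) (by gcongr))⟩
  have hcover : {x | HasDensityAt μ A x 0} ⊆ ⋃ k, closure (S k) := fun x hx ↦ by
    obtain ⟨u, hu, hux⟩ := mem_nhdsGT_iff_exists_Ioo_subset.mp
      (HasDensityAt.eventually_two_mul_measure_inter_ball_le hx hτ)
    obtain ⟨k, hk⟩ := exists_nat_one_div_lt (mem_Ioi.mp hu)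
    exact mem_iUnion.mpr ⟨k, subset_closure fun r hr ↦ hux ⟨hr.1, hr.2.trans hk⟩⟩
  refine (measure_mono hcover).trans ?_
  rw [hmono.measure_iUnion]
  exact iSup_le fun k ↦ perimeterMeasure_closure_le hA hAper hτ hτ1 (by positivity) fun _ hx ↦ hx

theorem perimeterMeasure_setOf_hasDensityAt_zero (hA : MeasurableSet A)
    (hAper : relPerimeter μ A univ ≠ ∞) :
    perimeterMeasure μ A {x | HasDensityAt μ A x 0} = 0 := by
  have hlim : Tendsto (fun τ : ℝ ↦ ENNReal.ofReal (8 * τ * (relPerimeter μ A univ).toReal))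
      (𝓝[>] 0) (𝓝 0) := by
    have hcont : Continuous fun τ : ℝ ↦ ENNReal.ofReal (8 * τ * (relPerimeter μ A univ).toReal) :=
      ENNReal.continuous_ofReal.comp (by fun_prop)
    simpa using (hcont.tendsto 0).mono_left nhdsWithin_le_nhds
  refine le_antisymm (ge_of_tendsto hlim ?_) zero_le
  filter_upwards [Ioo_mem_nhdsGT zero_lt_one] with τ hτ using
    perimeterMeasure_setOf_hasDensityAt_zero_le hA hAper hτ.1 hτ.2.le

theorem perimeterMeasure_compl_essBoundary (hA : MeasurableSet A)
    (hAper : relPerimeter μ A univ ≠ ∞) : perimeterMeasure μ A (essBoundary μ A)ᶜ = 0 := by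
  have hzero := perimeterMeasure_setOf_hasDensityAt_zero hA hAper
  have hone := perimeterMeasure_setOf_hasDensityAt_zero hA.compl
    ((relPerimeter_compl (μ := μ) hA univ).trans_ne hAper)
  rw [perimeterMeasure_compl hA] at hone
  refine measure_mono_null (fun x hx ↦ ?_) (measure_union_null hzero hone)
  rcases not_and_or.mp hx with h | h
  · exact .inl (not_not.mp h)
  · exact .inr (by simpa using (not_not.mp h).compl hA)

end Density

section Complement

variable {E : Type*} [NormedAddCommGroup E] [NormedSpace ℝ E] [FiniteDimensional ℝ E]
  [MeasurableSpace E] [BorelSpace E] {μ : Measure E} {A B : Set E}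

theorem relPerimeter_univ_sdiff_of_mutuallySingular [IsFiniteMeasureOnCompacts μ]
    (hB : MeasurableSet B) (hBA : B ⊆ A)
    (h : perimeterMeasure μ A ⟂ₘ perimeterMeasure μ B) :
    relPerimeter μ (A \ B) univ = relPerimeter μ A univ + relPerimeter μ B univ := by
  refine le_antisymm (relPerimeter_sdiff_le hB hBA univ) ?_
  obtain ⟨S, hS, hSA, hSB⟩ := h
  have hA := perimeterMeasure_le_add (μ := μ) (relPerimeter_left_le_sdiff_add hB hBA) hS.compl
  have hB := perimeterMeasure_le_add (μ := μ) (relPerimeter_right_le_sdiff_add hB hBA) hS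
  rw [hSB, add_zero] at hA
  rw [hSA, add_zero] at hB
  simp only [← perimeterMeasure_of_isOpen (μ := μ) isOpen_univ]
  calc perimeterMeasure μ A univ + perimeterMeasure μ B univ
      = perimeterMeasure μ A Sᶜ + perimeterMeasure μ B S := by
        rw [← measure_add_measure_compl (μ := perimeterMeasure μ A) hS,
          ← measure_add_measure_compl (μ := perimeterMeasure μ B) hS, hSA, hSB, zero_add, add_zero]
    _ ≤ perimeterMeasure μ (A \ B) Sᶜ + perimeterMeasure μ (A \ B) S := add_le_add hA hB
    _ = perimeterMeasure μ (A \ B) univ := by rw [add_comm, measure_add_measure_compl hS]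

theorem mutuallySingular_perimeterMeasure [μ.IsAddHaarMeasure] {n : ℕ}
    (hn : Module.finrank ℝ E = n + 1) (hA : MeasurableSet A) (hB : MeasurableSet B)
    (hAper : relPerimeter μ A univ ≠ ∞) (hBper : relPerimeter μ B univ ≠ ∞)
    (h0 : μH[n] (essBoundary μ A ∩ essBoundary μ B) = 0) :
    perimeterMeasure μ A ⟂ₘ perimeterMeasure μ B := by
  refine .mk (s := (essBoundary μ A)ᶜ) (t := essBoundary μ A)
    (perimeterMeasure_compl_essBoundary hA hAper) ?_ (compl_union_self _).ge
  rw [← inter_union_compl (essBoundary μ A) (essBoundary μ B)]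
  exact measure_union_null (perimeterMeasure_eq_zero_of_hausdorffMeasure_eq_zero hn hBper h0)
    (measure_mono_null inter_subset_right (perimeterMeasure_compl_essBoundary hB hBper))

end Complement

section LiquidDrop

variable {Λ Ω : Set E3}

theorem zero_mem_perCand (Ω : Set E3) : 0 ∈ perCand Ω :=
  ⟨0, contDiff_const, HasCompactSupport.zero, by simp, by simp [divg]⟩

theorem le_toReal_relPerimeter_of_mem_perCand (hΩ : relPerimeter volume Ω univ ≠ ∞) {a : ℝ}
    (ha : a ∈ perCand Ω) : a ≤ (relPerimeter volume Ω univ).toReal := by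
  obtain ⟨φ, hφ, hφc, hφ1, rfl⟩ := ha
  exact (le_abs_self _).trans (IsTestField.abs_flux_le ⟨hφ, hφc, subset_univ _, hφ1⟩ hΩ)

theorem relPerimeter_univ_le_ofReal_of_mem_upperBounds {b : ℝ} (hb : b ∈ upperBounds (perCand Ω)) :
    relPerimeter volume Ω univ ≤ ENNReal.ofReal b :=
  iSup₂_le fun φ hφ ↦ ENNReal.ofReal_le_ofReal <|
    hb ⟨φ, hφ.contDiff, hφ.hasCompactSupport, hφ.norm_le_one, rfl⟩

theorem hasFinPer_iff_relPerimeter_ne_top : HasFinPer Ω ↔ relPerimeter volume Ω univ ≠ ∞ where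
  mp := fun ⟨_, hb⟩ ↦
    ((relPerimeter_univ_le_ofReal_of_mem_upperBounds hb).trans_lt ENNReal.ofReal_lt_top).ne
  mpr h := ⟨_, fun _ ha ↦ le_toReal_relPerimeter_of_mem_perCand h ha⟩

theorem HasFinPer.per_eq_toReal_relPerimeter (h : HasFinPer Ω) :
    per Ω = (relPerimeter volume Ω univ).toReal := by
  refine le_antisymm ?_ ?_
  · exact csSup_le ⟨0, zero_mem_perCand Ω⟩ fun a ha ↦
      le_toReal_relPerimeter_of_mem_perCand (hasFinPer_iff_relPerimeter_ne_top.mp h) ha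
  · exact ENNReal.toReal_le_of_le_ofReal (le_csSup h (zero_mem_perCand Ω))
      (relPerimeter_univ_le_ofReal_of_mem_upperBounds fun a ha ↦ le_csSup h ha)

theorem per_sdiff (hΛm : MeasurableSet Λ) (hΛper : HasFinPer Λ) (hΩm : MeasurableSet Ω)
    (hΩΛ : Ω ⊆ Λ) (hΩper : HasFinPer Ω) (hnull : μH[2] (essBdry Ω ∩ essBdry Λ) = 0) :
    per (Λ \ Ω) = per Λ + per Ω := by
  have hΛtop := hasFinPer_iff_relPerimeter_ne_top.mp hΛper
  have hΩtop := hasFinPer_iff_relPerimeter_ne_top.mp hΩper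
  have hsing : perimeterMeasure volume Λ ⟂ₘ perimeterMeasure volume Ω := by
    refine mutuallySingular_perimeterMeasure finrank_euclideanSpace_fin hΛm hΩm hΛtop hΩtop ?_
    rw [inter_comm]
    exact_mod_cast hnull
  have hadd := relPerimeter_univ_sdiff_of_mutuallySingular hΩm hΩΛ hsing
  have hper : HasFinPer (Λ \ Ω) := hasFinPer_iff_relPerimeter_ne_top.mpr <| by
    rw [hadd]
    exact ENNReal.add_ne_top.mpr ⟨hΛtop, hΩtop⟩
  rw [hper.per_eq_toReal_relPerimeter, hΛper.per_eq_toReal_relPerimeter,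
    hΩper.per_eq_toReal_relPerimeter, hadd, ENNReal.toReal_add hΛtop hΩtop]

theorem ldEnergy_complement_general (hΛm : MeasurableSet Λ) (_hΛvol : volume Λ ≠ ∞)
    (hΛper : HasFinPer Λ) (ρ : ℝ) (hΩm : MeasurableSet Ω) (hΩΛ : Ω ⊆ Λ) (hΩper : HasFinPer Ω)
    (hnull : μH[2] (essBdry Ω ∩ essBdry Λ) = 0) :
    ldEnergy Λ ρ (Λ \ Ω) = per Λ + ldEnergy Λ (1 - ρ) Ω := by
  simp only [ldEnergy, indicator_sdiff_sub_mul_indicator hΩΛ, neg_mul_neg]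
  rw [per_sdiff hΛm hΛper hΩm hΩΛ hΩper hnull, add_assoc]

end LiquidDrop

/-- **Complement symmetry of the liquid drop energy**: if the essential boundaries of `Ω` and `Λ`
intersect in an `𝓗²`-null set, then `𝓔_Λ[ρ, Λ∖Ω] = Per(Λ) + 𝓔_Λ[1-ρ, Ω]`. -/
theorem ldEnergy_complement (Λ : Set E3) (hΛo : IsOpen Λ) (hΛb : IsBounded Λ)
    (hΛper : HasFinPer Λ) (ρ : ℝ) (hρ0 : 0 ≤ ρ) (hρ1 : ρ ≤ 1)
    (Ω : Set E3) (hΩm : MeasurableSet Ω) (hΩΛ : Ω ⊆ Λ) (hΩper : HasFinPer Ω)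
    (hnull : μH[2] (essBdry Ω ∩ essBdry Λ) = 0) :
    ldEnergy Λ ρ (Λ \ Ω) = per Λ + ldEnergy Λ (1 - ρ) Ω :=
  ldEnergy_complement_general hΛo.measurableSet hΛb.measure_lt_top.ne hΛper ρ hΩm hΩΛ hΩper hnull

end
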